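/- arXiv:1306.5434 — 5 statements merged into one kernel-verified Lean document; each statement's English description precedes it below -/
import Mathlib

section
/- There is a universal constant C ∈ (0,∞) such that for every separable metric space (X,d_X) and every α ∈ (0,1], the α-snowflake of the Euclidean cone over X satisfies c_2(Cone(X), d_{Cone(X)}^α) ≤ C·c_2(X, d_X^α). -/
/-!
Statement 10 (Proposition 5.7 of Mendel–Naor): there is a universal constant `C`
such that for every separable metric space `(X, d_X)` and every `α ∈ (0,1]`,
`c₂(Cone(X), d_{Cone(X)}^α) ≤ C · c₂(X, d_X^α)`.

The Euclidean cone is realized as the set `(0,∞) × X` equipped with the cone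
metric, and `L₂ = L₂([0,1])` is the target Hilbert space.
-/

open MeasureTheory ENNReal

noncomputable section

/-- `L₂ = L₂([0,1])`. -/
abbrev L2 : Type :=
  Lp ℝ 2 (volume.restrict (Set.Icc (0 : ℝ) 1))

/-- The Euclidean cone distance over a space with distance function `dX`:
`d((s,x),(t,y)) = √(s² + t² − 2 s t cos(min{π, d_X(x,y)}))`. -/
def coneDist {X : Type*} (dX : X → X → ℝ) (p q : ℝ × X) : ℝ :=
  Real.sqrt (p.1 ^ 2 + q.1 ^ 2 - 2 * p.1 * q.1 * Real.cos (min Real.pi (dX p.2 q.2)))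

/-- The point set of the Euclidean cone over `X` (minus the cusp): `(0,∞) × X`. -/
def Cone (X : Type*) : Type _ :=
  {p : ℝ × X // 0 < p.1}

/-- The cone distance on `Cone X`. -/
def coneD {X : Type*} (dX : X → X → ℝ) (p q : Cone X) : ℝ :=
  coneDist dX p.1 q.1

/-- The bi-Lipschitz distortion `c_{(V,d_V)}(U,d_U)`, valued in `ℝ≥0∞`. -/
def distortion {U V : Type*} (dU : U → U → ℝ) (dV : V → V → ℝ) : ℝ≥0∞ :=
  sInf {D : ℝ≥0∞ | ∃ c : ℝ, 1 ≤ c ∧ D = ENNReal.ofReal c ∧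
    ∃ (s : ℝ) (f : U → V), 0 < s ∧ ∀ x y : U,
      s * dU x y ≤ dV (f x) (f y) ∧ dV (f x) (f y) ≤ c * s * dU x y}

/-!
Let `f : X → L₂` satisfy `d^α ≤ ‖f x - f y‖ ≤ c d^α` (after rescaling). The cone embeds through
the map with kernel
`K((s,u),(t,v)) = s^α t^α exp(-‖u-v‖²/2) + (s^{2α} + t^{2α} - |s-t|^{2α})/2`
evaluated at `u = f x`, `v = f y`; the squared Hilbert distance it induces is
`N = (s^α - t^α)² + 2 (st)^α (1 - exp(-‖u-v‖²/2)) + |s-t|^{2α}`.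
On the other hand the squared cone distance is `(s-t)² + st · q`, where the squared chord `q` is
comparable to `min(1,d)²`. Since `x ↦ x^α` is subadditive, the `α`-power of it is comparable to
`|s-t|^{2α} + (st)^α min(1,d^α)²`, and so is `N`, up to universal constants and a factor `c²` in the
upper bound (`cone_estimate`).

Positivity of `K` has two sources. The Gaussian kernel is a rank-one rescaling of the entrywise
exponential of a Gram matrix, hence positive by the Schur product theorem (`psd_gauss`). The second
summand is the fractional Brownian covariance; up to a constant it is the integral over `l > 0` of
positive kernels `(1 - cos ls)(1 - cos lt) + sin ls sin lt` against `l^{-1-2α}` when `α < 1`, and it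
is the kernel `st` when `α = 1` (`psd_fbm`).

A positive semidefinite kernel which is continuous on a separable space is realized in a separable
closed subspace of its reproducing kernel Hilbert space, and every separable Hilbert space embeds
isometrically in `L₂([0,1])` (`exists_map_L2`).
-/

open Filter Topology Matrix

instance fact_two_ne_top : Fact ((2 : ℝ≥0∞) ≠ ∞) := ⟨by simp⟩

/-! ### Positive semidefinite kernels on arbitrary index sets -/

theorem psd_of {S : Type*} (K : Matrix S S ℝ) (hs : ∀ i j, K i j = K j i)
    (h : ∀ (x : S → ℝ) (A : Finset S), 0 ≤ ∑ i ∈ A, ∑ j ∈ A, x i * K i j * x j) :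
    K.PosSemidef := by
  refine ⟨by ext i j; simp [hs i j], fun x => ?_⟩
  simpa [Finsupp.sum] using h x x.support

theorem psd_sum_nonneg {S : Type*} {K : Matrix S S ℝ} (hK : K.PosSemidef)
    (x : S → ℝ) (A : Finset S) : 0 ≤ ∑ i ∈ A, ∑ j ∈ A, x i * K i j * x j := by
  classical
  have h := hK.2 (Finsupp.onFinset A (fun i => if i ∈ A then x i else 0) (by
    intro a ha; by_contra h; simp [h] at ha))
  rw [Finsupp.onFinset_sum _ (by simp)] at h
  refine h.trans_eq (Finset.sum_congr rfl fun i hi => ?_)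
  rw [Finsupp.onFinset_sum _ (by simp)]
  refine Finset.sum_congr rfl fun j hj => ?_
  simp [hi, hj]

theorem psd_symm {S : Type*} {K : Matrix S S ℝ} (hK : K.PosSemidef) (i j : S) :
    K i j = K j i := by
  simpa using hK.1.apply j i

theorem psd_gram {S E : Type*} [NormedAddCommGroup E] [InnerProductSpace ℝ E] (v : S → E) :
    (Matrix.gram ℝ v).PosSemidef := by
  refine psd_of _ (fun i j => by simp [real_inner_comm]) fun x A => ?_
  have : ∑ i ∈ A, ∑ j ∈ A, x i * Matrix.gram ℝ v i j * x j =
      inner ℝ (∑ i ∈ A, x i • v i) (∑ i ∈ A, x i • v i) := by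
    rw [sum_inner]
    refine Finset.sum_congr rfl fun i _ => ?_
    rw [inner_sum]
    refine Finset.sum_congr rfl fun j _ => ?_
    rw [real_inner_smul_left, real_inner_smul_right, Matrix.gram_apply]
    ring
  rw [this]
  exact real_inner_self_nonneg

theorem psd_rankOne {S : Type*} (v : S → ℝ) :
    (Matrix.of fun i j => v i * v j).PosSemidef := by
  have e : (Matrix.of fun i j => v i * v j) = Matrix.gram ℝ v := by
    ext i j
    simp [mul_comm]
  rw [e]
  exact psd_gram v

theorem psd_hadamard {S : Type*} {K L : Matrix S S ℝ} (hK : K.PosSemidef)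
    (hL : L.PosSemidef) : (K ⊙ L).PosSemidef := hK.hadamard hL

theorem psd_tendsto {S : Type*} {K : ℕ → Matrix S S ℝ} {L : Matrix S S ℝ}
    (hK : ∀ n, (K n).PosSemidef)
    (h : ∀ i j, Tendsto (fun n => K n i j) atTop (𝓝 (L i j))) : L.PosSemidef := by
  refine psd_of _ (fun i j => ?_) fun x A => ?_
  · refine tendsto_nhds_unique (h i j) ?_
    simpa only [fun n => psd_symm (hK n) i j] using h j i
  · refine ge_of_tendsto' (tendsto_finsetSum _ fun i _ => tendsto_finsetSum _ fun j _ =>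
      ((h i j).const_mul (x i)).mul_const (x j)) fun n => psd_sum_nonneg (hK n) x A

theorem psd_integral {S Ω : Type*} [MeasurableSpace Ω] {μ : Measure Ω}
    {K : Ω → Matrix S S ℝ} (hK : ∀ ω, (K ω).PosSemidef)
    (hKint : ∀ i j, Integrable (fun ω => K ω i j) μ) :
    (Matrix.of fun i j => ∫ ω, K ω i j ∂μ).PosSemidef := by
  refine psd_of _ (fun i j => ?_) fun x A => ?_
  · simp only [Matrix.of_apply, fun ω => psd_symm (hK ω) i j]
  · have : ∑ i ∈ A, ∑ j ∈ A, x i * (∫ ω, K ω i j ∂μ) * x j =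
        ∫ ω, ∑ i ∈ A, ∑ j ∈ A, x i * K ω i j * x j ∂μ := by
      rw [integral_finsetSum _ fun i _ => integrable_finsetSum _ fun j _ =>
        ((hKint i j).const_mul (x i)).mul_const (x j)]
      refine Finset.sum_congr rfl fun i _ => ?_
      rw [integral_finsetSum _ fun j _ => ((hKint i j).const_mul (x i)).mul_const (x j)]
      refine Finset.sum_congr rfl fun j _ => ?_
      rw [integral_mul_const, integral_const_mul]
    simp only [Matrix.of_apply]
    rw [this]
    exact integral_nonneg fun ω => psd_sum_nonneg (hK ω) x A

/-- Entrywise exponential: limit of the partial sums of the power series, whose terms are positive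
by the Schur product theorem. -/
theorem psd_exp {S : Type*} {K : Matrix S S ℝ} (hK : K.PosSemidef) :
    (Matrix.of fun i j => Real.exp (K i j)).PosSemidef := by
  have hpow : ∀ n : ℕ, (Matrix.of fun i j => K i j ^ n).PosSemidef := by
    intro n
    induction n with
    | zero => simpa using psd_rankOne (fun _ : S => (1 : ℝ))
    | succ n ih =>
      have e : (Matrix.of fun i j => K i j ^ (n + 1)) = (Matrix.of fun i j => K i j ^ n) ⊙ K := by
        ext i j
        simp [pow_succ]
      rw [e]
      exact psd_hadamard ih hK
  refine psd_tendsto (K := fun N => ∑ n ∈ Finset.range N,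
    ((n.factorial : ℝ)⁻¹) • (Matrix.of fun i j => K i j ^ n)) (fun N => ?_) fun i j => ?_
  · exact Matrix.posSemidef_sum _ fun n _ => (hpow n).smul (by positivity)
  · have := (NormedSpace.expSeries_div_hasSum_exp (𝔸 := ℝ) (K i j)).tendsto_sum_nat
    rw [← Real.exp_eq_exp_ℝ] at this
    simpa [Matrix.sum_apply, div_eq_inv_mul] using this

/-- Uses `exp(-‖u-v‖²/2) = exp(-‖u‖²/2) exp(-‖v‖²/2) exp⟪u,v⟫`. -/
theorem psd_gauss {S E : Type*} [NormedAddCommGroup E] [InnerProductSpace ℝ E] (a : S → ℝ)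
    (v : S → E) :
    (Matrix.of fun i j => a i * a j * Real.exp (-‖v i - v j‖ ^ 2 / 2)).PosSemidef := by
  have e : (Matrix.of fun i j => a i * a j * Real.exp (-‖v i - v j‖ ^ 2 / 2)) =
      (Matrix.of fun i j => (a i * Real.exp (-‖v i‖ ^ 2 / 2)) * (a j * Real.exp (-‖v j‖ ^ 2 / 2))) ⊙
        (Matrix.of fun i j => Real.exp (Matrix.gram ℝ v i j)) := by
    ext i j
    have : -‖v i - v j‖ ^ 2 / 2 = -‖v i‖ ^ 2 / 2 + -‖v j‖ ^ 2 / 2 + inner ℝ (v i) (v j) := by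
      rw [norm_sub_sq_real]; ring
    simp only [Matrix.of_apply, Matrix.hadamard_apply, Matrix.gram_apply, this, Real.exp_add]
    ring
  rw [e]
  exact psd_hadamard (psd_rankOne _) (psd_exp (psd_gram v))

/-! ### Realizing kernels in `L₂([0,1])` -/

/-- Normalized indicators of the disjoint intervals `(1/(n+2), 1/(n+1)]`. -/
theorem exists_orthonormal_L2 : ∃ e : ℕ → L2, Orthonormal ℝ e := by
  let s : ℕ → Set ℝ := fun n => Set.Ioc (1 / ((n : ℝ) + 2)) (1 / ((n : ℝ) + 1))
  have hs : ∀ n, MeasurableSet (s n) := fun n => measurableSet_Ioc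
  have hfin : ∀ n, (volume.restrict (Set.Icc (0 : ℝ) 1)) (s n) ≠ ∞ := fun n =>
    measure_ne_top _ _
  have hpos : ∀ n, (volume.restrict (Set.Icc (0 : ℝ) 1)) (s n) ≠ 0 := by
    intro n
    have hsub : s n ⊆ Set.Icc 0 1 := by
      intro x hx
      refine ⟨le_trans (by positivity) hx.1.le, hx.2.trans ?_⟩
      rw [div_le_one (by positivity)]
      linarith [(n.cast_nonneg : (0 : ℝ) ≤ n)]
    rw [Measure.restrict_apply (hs n), Set.inter_eq_left.2 hsub, Real.volume_Ioc]
    simp only [ne_eq, ENNReal.ofReal_eq_zero, not_le, sub_pos]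
    exact one_div_lt_one_div_of_lt (by positivity) (by linarith)
  have hdisj : ∀ m n, m < n → Disjoint (s m) (s n) := by
    intro m n h
    rw [Set.disjoint_left]
    intro x hx hy
    have h1 : ((m : ℝ) + 1) ≤ n := by exact_mod_cast h
    have h2 : 1 / ((n : ℝ) + 1) ≤ 1 / ((m : ℝ) + 2) :=
      one_div_le_one_div_of_le (by positivity) (by linarith)
    exact absurd (hx.1.trans_le (hy.2.trans h2)) (lt_irrefl _)
  let v : ℕ → L2 := fun n => indicatorConstLp 2 (hs n) (hfin n) (1 : ℝ)
  have hne : ∀ n, ‖v n‖ ≠ 0 := by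
    intro n
    have : ‖v n‖ = _ := norm_indicatorConstLp (by simp) (by simp)
    rw [this]
    have := ENNReal.toReal_pos (hpos n) (hfin n)
    rw [norm_one, one_mul]
    exact (Real.rpow_pos_of_pos this _).ne'
  have hinner : ∀ m n, m ≠ n → inner ℝ (v m) (v n) = 0 := by
    intro m n hmn
    have hd : Disjoint (s m) (s n) := by
      rcases hmn.lt_or_gt with h | h
      · exact hdisj m n h
      · exact (hdisj n m h).symm
    rw [MeasureTheory.L2.real_inner_indicatorConstLp_one_indicatorConstLp_one, hd.inter_eq]
    simp
  refine ⟨fun n => ‖v n‖⁻¹ • v n, fun n => ?_, fun m n hmn => ?_⟩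
  · rw [norm_smul, norm_inv, norm_norm, inv_mul_cancel₀ (hne n)]
  · simp only [real_inner_smul_left, real_inner_smul_right, hinner m n hmn, mul_zero]

/-- Vectors of an orthonormal family are at mutual distance `√2`, so balls of radius `1/2` around
them are disjoint. -/
theorem orthonormal_countable {E ι : Type*} [NormedAddCommGroup E] [InnerProductSpace ℝ E]
    [TopologicalSpace.SeparableSpace E] {b : ι → E} (hb : Orthonormal ℝ b) : Countable ι := by
  refine Set.countable_univ_iff.1 (Set.PairwiseDisjoint.countable_of_isOpen
    (s := fun i => Metric.ball (b i) (1 / 2)) ?_ (fun i _ => Metric.isOpen_ball)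
    fun i _ => ⟨b i, by simp⟩)
  intro i _ j _ hij
  refine Metric.ball_disjoint_ball ?_
  have h : ‖b i - b j‖ ^ 2 = 2 := by
    rw [norm_sub_sq_real, hb.1 i, hb.1 j, hb.2 hij]; norm_num
  rw [dist_eq_norm]
  nlinarith [norm_nonneg (b i - b j)]

theorem exists_isometry_L2 (E : Type*) [NormedAddCommGroup E] [InnerProductSpace ℝ E]
    [CompleteSpace E] [TopologicalSpace.SeparableSpace E] : Nonempty (E →ₗᵢ[ℝ] L2) := by
  obtain ⟨w, b, -⟩ := exists_hilbertBasis ℝ E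
  have := orthonormal_countable b.orthonormal
  obtain ⟨i, hi⟩ := exists_injective_nat w
  obtain ⟨e, he⟩ := exists_orthonormal_L2
  exact ⟨((he.comp i hi).orthogonalFamily.linearIsometry).comp b.repr.toLinearIsometry⟩

universe u

open RKHS in
/-- The scalar kernel `K` is viewed as an `ℝ →L[ℝ] ℝ`-valued one, and `F p` is the kernel function
at `p` in its reproducing kernel Hilbert space. -/
theorem exists_hilbert_of_psd {S : Type u} (K : Matrix S S ℝ) (hK : K.PosSemidef) :
    ∃ (H : Type u) (_ : NormedAddCommGroup H) (_ : InnerProductSpace ℝ H) (_ : CompleteSpace H)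
      (F : S → H), ∀ p q, inner ℝ (F p) (F q) = K p q := by
  let K' : Matrix S S (ℝ →L[ℝ] ℝ) := Matrix.of fun p q => K p q • ContinuousLinearMap.id ℝ ℝ
  have hK' : K'.PosSemidef := by
    have hherm : K'.IsHermitian := by
      ext p q
      simp [K', psd_symm hK p q, ContinuousLinearMap.star_eq_adjoint, ContinuousLinearMap.adjoint_id]
    have hT := (RKHS.posSemidef_tfae (K := K')).out 0 2
    refine hT.2 ⟨hherm, fun vv => ?_⟩
    have := psd_sum_nonneg hK vv vv.support
    refine this.trans_eq ?_
    simp only [Finsupp.sum, RCLike.re_to_real]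
    refine Finset.sum_congr rfl fun i _ => Finset.sum_congr rfl fun j _ => ?_
    simp [K', psd_symm hK i j]
    ring
  have : Fact K'.PosSemidef := ⟨hK'⟩
  refine ⟨OfKernel K', inferInstance, inferInstance, inferInstance,
    fun p => kerFun (OfKernel K') p 1, fun p q => ?_⟩
  have h := kernel_inner (OfKernel K') q p (1 : ℝ) (1 : ℝ)
  rw [RKHS.OfKernel.kernel_ofKernel] at h
  rw [← h]
  simp [K', psd_symm hK]

/-- Continuity of `K` makes the feature map continuous, so its range spans a separable space. -/
theorem exists_map_L2 {S : Type u} [TopologicalSpace S] [TopologicalSpace.SeparableSpace S]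
    (K : Matrix S S ℝ) (hK : K.PosSemidef) (hc : Continuous fun p : S × S => K p.1 p.2) :
    ∃ F : S → L2, ∀ p q, dist (F p) (F q) ^ 2 = K p p + K q q - 2 * K p q := by
  obtain ⟨H, _, _, _, F, hF⟩ := exists_hilbert_of_psd K hK
  have hd : ∀ p q, dist (F p) (F q) ^ 2 = K p p + K q q - 2 * K p q := by
    intro p q
    rw [dist_eq_norm, norm_sub_sq_real, ← real_inner_self_eq_norm_sq, ← real_inner_self_eq_norm_sq,
      hF, hF, hF]
    ring
  have hcont : Continuous F := by
    rw [continuous_iff_continuousAt]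
    intro p
    rw [ContinuousAt, tendsto_iff_dist_tendsto_zero]
    have h1 : Continuous fun q => √(K q q + K p p - 2 * K q p) := by
      have a1 : Continuous fun q => K q q := hc.comp (continuous_id.prodMk continuous_id)
      have a2 : Continuous fun q => K q p := hc.comp (continuous_id.prodMk continuous_const)
      fun_prop
    have h2 := h1.tendsto p
    have e : K p p + K p p - 2 * K p p = 0 := by ring
    rw [e, Real.sqrt_zero] at h2
    refine h2.congr fun q => ?_
    rw [← hd, Real.sqrt_sq dist_nonneg]
  let V : Submodule ℝ H := (Submodule.span ℝ (Set.range F)).topologicalClosure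
  have hsep : TopologicalSpace.IsSeparable (V : Set H) :=
    ((TopologicalSpace.isSeparable_range hcont).span (R := ℝ)).closure
  have : TopologicalSpace.SeparableSpace V := hsep.separableSpace
  have : CompleteSpace V :=
    (Submodule.isClosed_topologicalClosure _).completeSpace_coe
  obtain ⟨J⟩ := exists_isometry_L2 V
  have hmem : ∀ p, F p ∈ V := fun p =>
    Submodule.le_topologicalClosure _ (Submodule.subset_span ⟨p, rfl⟩)
  refine ⟨fun p => J ⟨F p, hmem p⟩, fun p q => ?_⟩
  rw [J.dist_map, Subtype.dist_eq, hd]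

/-! ### The fractional Brownian covariance kernel -/

/-- Convergence holds at `0` because `1 - cos (l x) = O(l²)` and `α < 1`, and at infinity because
`α > 0`. -/
theorem fbm_integrable {α : ℝ} (h0 : 0 < α) (h1 : α < 1) (x : ℝ) :
    IntegrableOn (fun l : ℝ => (1 - Real.cos (l * x)) * |l| ^ (-1 - 2 * α)) (Set.Ioi 0) := by
  have hmeas : Measurable fun l : ℝ => (1 - Real.cos (l * x)) * |l| ^ (-1 - 2 * α) := by
    fun_prop
  rw [← Set.Ioc_union_Ioi_eq_Ioi (zero_le_one' ℝ)]
  refine IntegrableOn.union ?_ ?_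
  · have hb : IntegrableOn (fun l : ℝ => x ^ 2 / 2 * l ^ (1 - 2 * α)) (Set.Ioc 0 1) := by
      refine Integrable.const_mul ?_ _
      exact (intervalIntegrable_iff_integrableOn_Ioc_of_le zero_le_one).1
        (intervalIntegral.intervalIntegrable_rpow' (by linarith))
    refine Integrable.mono' hb hmeas.aestronglyMeasurable ?_
    filter_upwards [ae_restrict_mem measurableSet_Ioc] with l hl
    have e : l ^ (1 - 2 * α) = l ^ 2 * l ^ (-1 - 2 * α) := by
      rw [← Real.rpow_natCast l 2, ← Real.rpow_add hl.1]; norm_num; ring_nf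
    have hc := Real.one_sub_sq_div_two_le_cos (x := l * x)
    have hc1 := Real.cos_le_one (l * x)
    have hp := Real.rpow_nonneg hl.1.le (-1 - 2 * α)
    rw [abs_of_pos hl.1, Real.norm_of_nonneg (mul_nonneg (by linarith) hp), e]
    have : (1 - Real.cos (l * x)) ≤ x ^ 2 / 2 * l ^ 2 := by nlinarith
    calc _ ≤ x ^ 2 / 2 * l ^ 2 * l ^ (-1 - 2 * α) := mul_le_mul_of_nonneg_right this hp
      _ = _ := by ring
  · have hb : IntegrableOn (fun l : ℝ => 2 * l ^ (-1 - 2 * α)) (Set.Ioi 1) :=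
      (integrableOn_Ioi_rpow_of_lt (by linarith) one_pos).const_mul _
    refine Integrable.mono' hb hmeas.aestronglyMeasurable ?_
    filter_upwards [ae_restrict_mem measurableSet_Ioi] with l hl
    have hl0 : (0 : ℝ) < l := one_pos.trans hl
    have hc := Real.neg_one_le_cos (l * x)
    have hc1 := Real.cos_le_one (l * x)
    have hp := Real.rpow_nonneg hl0.le (-1 - 2 * α)
    rw [abs_of_pos hl0, Real.norm_of_nonneg (mul_nonneg (by linarith) hp)]
    exact mul_le_mul_of_nonneg_right (by linarith) hp

theorem fbm_pos {α : ℝ} (h0 : 0 < α) (h1 : α < 1) :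
    0 < ∫ l in Set.Ioi (0 : ℝ), (1 - Real.cos (l * 1)) * |l| ^ (-1 - 2 * α) := by
  rw [setIntegral_pos_iff_support_of_nonneg_ae ?_ (fbm_integrable h0 h1 1)]
  · refine lt_of_lt_of_le ?_ (measure_mono (s := Set.Ioo (0 : ℝ) 1) ?_)
    · simp
    · intro l hl
      refine ⟨?_, hl.1⟩
      have hc : Real.cos l < 1 := by
        rw [← Real.cos_zero]
        exact Real.cos_lt_cos_of_nonneg_of_le_pi le_rfl (by linarith [Real.pi_gt_three, hl.2]) hl.1
      have hp := Real.rpow_pos_of_pos (abs_pos.2 hl.1.ne') (-1 - 2 * α)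
      rw [Function.mem_support, mul_one]
      exact (mul_pos (by linarith) hp).ne'
  · refine Eventually.of_forall fun l => ?_
    exact mul_nonneg (by linarith [Real.cos_le_one (l * 1)]) (Real.rpow_nonneg (abs_nonneg _) _)

/-- Homogeneity, from the substitution `l ↦ |x| l`. -/
theorem fbm_scaling {α : ℝ} (h0 : 0 < α) (x : ℝ) :
    ∫ l in Set.Ioi (0 : ℝ), (1 - Real.cos (l * x)) * |l| ^ (-1 - 2 * α) =
      |x| ^ (2 * α) * ∫ l in Set.Ioi (0 : ℝ), (1 - Real.cos (l * 1)) * |l| ^ (-1 - 2 * α) := by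
  rcases eq_or_ne x 0 with rfl | hx
  · simp [Real.zero_rpow (mul_pos two_pos h0).ne']
  have hb : 0 < |x| := abs_pos.2 hx
  have h := integral_comp_mul_right_Ioi
    (fun l : ℝ => (1 - Real.cos (l * 1)) * |l| ^ (-1 - 2 * α)) 0 hb
  rw [zero_mul, smul_eq_mul] at h
  have e : ∀ l : ℝ, (1 - Real.cos (l * x)) * |l| ^ (-1 - 2 * α) =
      |x| ^ (1 + 2 * α) * ((1 - Real.cos (l * |x| * 1)) * abs (l * |x|) ^ (-1 - 2 * α)) := by
    intro l
    have hcos : Real.cos (l * |x| * 1) = Real.cos (l * x) := by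
      rcases abs_choice x with h | h <;> simp [h]
    have hpow : |x| ^ (1 + 2 * α) * |x| ^ (-1 - 2 * α) = 1 := by
      rw [← Real.rpow_add hb]; ring_nf; simp
    rw [hcos, abs_mul, abs_abs, Real.mul_rpow (abs_nonneg _) (abs_nonneg _)]
    linear_combination (-(1 - Real.cos (l * x)) * |l| ^ (-1 - 2 * α)) * hpow
  simp_rw [e]
  rw [integral_const_mul, h, ← mul_assoc]
  congr 1
  rw [Real.rpow_add hb, Real.rpow_one]
  field_simp

theorem psd_fbm {α : ℝ} (h0 : 0 < α) (h1 : α ≤ 1) :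
    (Matrix.of fun s t : ℝ =>
      |s| ^ (2 * α) + |t| ^ (2 * α) - |s - t| ^ (2 * α)).PosSemidef := by
  rcases h1.eq_or_lt with rfl | h1
  · have e : (Matrix.of fun s t : ℝ =>
        |s| ^ (2 * (1 : ℝ)) + |t| ^ (2 * (1 : ℝ)) - |s - t| ^ (2 * (1 : ℝ))) =
        Matrix.of fun s t : ℝ => (√2 * s) * (√2 * t) := by
      ext s t
      have h2 := Real.mul_self_sqrt (zero_le_two (α := ℝ))
      simp only [Matrix.of_apply, mul_one, Real.rpow_two, sq_abs]
      linear_combination (- s * t) * h2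
    rw [e]
    exact psd_rankOne _
  set c := ∫ l in Set.Ioi (0 : ℝ), (1 - Real.cos (l * 1)) * |l| ^ (-1 - 2 * α) with hc
  have hcpos : 0 < c := fbm_pos h0 h1
  let K : ℝ → Matrix ℝ ℝ ℝ := fun l => (|l| ^ (-1 - 2 * α)) •
    ((Matrix.of fun s t : ℝ => (1 - Real.cos (l * s)) * (1 - Real.cos (l * t))) +
      Matrix.of fun s t : ℝ => Real.sin (l * s) * Real.sin (l * t))
  have hK : ∀ l, (K l).PosSemidef := fun l =>
    ((psd_rankOne _).add (psd_rankOne _)).smul (Real.rpow_nonneg (abs_nonneg _) _)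
  have hKe : ∀ s t : ℝ, (fun l => K l s t) = fun l =>
      (1 - Real.cos (l * s)) * |l| ^ (-1 - 2 * α) + (1 - Real.cos (l * t)) * |l| ^ (-1 - 2 * α)
        - (1 - Real.cos (l * (s - t))) * |l| ^ (-1 - 2 * α) := by
    intro s t
    ext l
    simp only [K, Matrix.smul_apply, Matrix.add_apply, Matrix.of_apply, smul_eq_mul, mul_sub l,
      Real.cos_sub]
    ring
  have hI := fun x => fbm_integrable h0 h1 x
  have hKint : ∀ s t, Integrable (fun l => K l s t) (volume.restrict (Set.Ioi 0)) := by
    intro s t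
    rw [hKe]
    exact ((hI s).add (hI t)).sub (hI (s - t))
  have e : (Matrix.of fun s t : ℝ => |s| ^ (2 * α) + |t| ^ (2 * α) - |s - t| ^ (2 * α)) =
      c⁻¹ • Matrix.of fun s t => ∫ l in Set.Ioi (0 : ℝ), K l s t := by
    ext s t
    simp only [Matrix.of_apply, Matrix.smul_apply, smul_eq_mul]
    have hsub := integral_sub ((hI s).add (hI t)) (hI (s - t))
    simp only [Pi.add_apply] at hsub
    rw [hKe, hsub, integral_add (hI s) (hI t),
      fbm_scaling h0 s, fbm_scaling h0 t, fbm_scaling h0 (s - t), ← hc]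
    field_simp
  rw [e]
  exact (psd_integral hK hKint).smul (inv_nonneg.2 hcpos.le)

/-! ### Metric estimates on the cone -/

/-- The squared chord `2 (1 - cos θ)`, with `θ = min π d`, is comparable to `min(1,d)²`. -/
theorem chord_bounds {d : ℝ} (hd : 0 ≤ d) :
    4 / Real.pi ^ 2 * min 1 d ^ 2 ≤ 2 * (1 - Real.cos (min Real.pi d)) ∧
      2 * (1 - Real.cos (min Real.pi d)) ≤ 4 * min 1 d ^ 2 := by
  have hpi := Real.pi_gt_three
  have hθ0 : 0 ≤ min Real.pi d := le_min (by linarith) hd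
  have hm0 : 0 ≤ min 1 d := le_min zero_le_one hd
  constructor
  · have h := Real.cos_le_one_sub_mul_cos_sq (x := min Real.pi d)
      (by rw [abs_of_nonneg hθ0]; exact min_le_left _ _)
    have hm : min 1 d ≤ min Real.pi d := min_le_min_right d (by linarith)
    calc 4 / Real.pi ^ 2 * min 1 d ^ 2 ≤ 4 / Real.pi ^ 2 * min Real.pi d ^ 2 := by gcongr
      _ = 2 * (2 / Real.pi ^ 2 * min Real.pi d ^ 2) := by ring
      _ ≤ _ := by linarith
  · rcases le_total d 1 with h | h
    · rw [min_eq_right (h.trans (by linarith)), min_eq_right h]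
      nlinarith [Real.one_sub_sq_div_two_le_cos (x := d)]
    · rw [min_eq_left h]
      linarith [Real.neg_one_le_cos (min Real.pi d)]

theorem one_sub_exp_bounds {x : ℝ} (hx : 0 ≤ x) :
    1 - Real.exp (-x) ≤ min 1 x ∧ min 1 x / 2 ≤ 1 - Real.exp (-x) := by
  refine ⟨le_min (by linarith [Real.exp_pos (-x)]) (by linarith [Real.add_one_le_exp (-x)]), ?_⟩
  have h1 : Real.exp (-x) ≤ 1 / (1 + x) := by
    rw [Real.exp_neg, ← one_div]
    exact one_div_le_one_div_of_le (by linarith) (by linarith [Real.add_one_le_exp x])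
  have h2 : 1 / (1 + x) ≤ 1 - min 1 x / 2 := by
    rw [div_le_iff₀ (by linarith)]
    rcases le_total x 1 with h | h
    · rw [min_eq_right h]; nlinarith
    · rw [min_eq_left h]; linarith
  linarith

set_option maxHeartbeats 1000000 in
/-- The distance `√N` induced by the kernel is comparable to `ρ^α`, where `ρ` is the cone distance:
`d` stands for the distance in `X` and `r` for the distance of the images in `L₂`. -/
theorem cone_estimate {s t d r c α : ℝ} (hs : 0 < s) (ht : 0 < t) (hd : 0 ≤ d) (hα : 0 < α)
    (hα1 : α ≤ 1) (hc : 1 ≤ c) (hr1 : d ^ α ≤ r) (hr2 : r ≤ c * d ^ α)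
    {ρ N : ℝ} (hρ : ρ = √(s ^ 2 + t ^ 2 - 2 * s * t * Real.cos (min Real.pi d)))
    (hN : N = (s ^ α) ^ 2 + (t ^ α) ^ 2 - 2 * (s ^ α * t ^ α * Real.exp (-r ^ 2 / 2)) +
      (|s - t| ^ α) ^ 2) :
    (1 / 3 * ρ ^ α) ^ 2 ≤ N ∧ N ≤ (12 * c * (1 / 3) * ρ ^ α) ^ 2 := by
  have hst : 0 < s * t := mul_pos hs ht
  set q := 2 * (1 - Real.cos (min Real.pi d)) with hq
  set m := min 1 d with hm
  obtain ⟨hq1, hq2⟩ := chord_bounds hd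
  rw [← hq, ← hm] at hq1 hq2
  have hm0 : 0 ≤ m := le_min zero_le_one hd
  have hq0 : 0 ≤ q := le_trans (by positivity) hq1
  -- the square of the cone distance splits into a radial and an angular part
  have hρ2 : ρ ^ 2 = (s - t) ^ 2 + s * t * q := by
    rw [hρ, Real.sq_sqrt]
    · rw [hq]; ring
    · have : s ^ 2 + t ^ 2 - 2 * s * t * Real.cos (min Real.pi d) = (s - t) ^ 2 + s * t * q := by
        rw [hq]; ring
      rw [this]; positivity
  have hρ0 : 0 ≤ ρ := hρ ▸ Real.sqrt_nonneg _
  have sqpow : ∀ x : ℝ, 0 ≤ x → (x ^ α) ^ 2 = (x ^ 2) ^ α := by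
    intro x hx
    rw [← Real.rpow_natCast, ← Real.rpow_natCast, ← Real.rpow_mul hx, ← Real.rpow_mul hx, mul_comm]
  set A := (|s - t| ^ α) ^ 2 with hA
  have hA' : A = ((s - t) ^ 2) ^ α := by rw [hA, sqpow _ (abs_nonneg _), sq_abs]
  set P := s ^ α * t ^ α with hP
  have hP' : P = (s * t) ^ α := (Real.mul_rpow hs.le ht.le).symm
  have hP0 : 0 < P := by positivity
  set M := (m ^ α) ^ 2 with hM
  have hM' : M = (m ^ 2) ^ α := sqpow _ hm0
  have hM0 : 0 ≤ M := by positivity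
  have hA0 : 0 ≤ A := by positivity
  set R := (ρ ^ α) ^ 2 with hR
  have hR' : R = ((s - t) ^ 2 + s * t * q) ^ α := by rw [hR, sqpow _ hρ0, hρ2]
  have hR0 : 0 ≤ R := by positivity
  have h4 : (4 : ℝ) ^ α ≤ 4 := by
    simpa using Real.rpow_le_rpow_of_exponent_le (by norm_num : (1 : ℝ) ≤ 4) hα1
  have hRA : A ≤ R := by
    rw [hA', hR']
    exact Real.rpow_le_rpow (sq_nonneg _) (by linarith [mul_nonneg hst.le hq0]) hα.le
  have hRP : P * M ≤ 4 * R := by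
    have hpi4 : 1 / 4 ≤ 4 / Real.pi ^ 2 := by
      rw [div_le_div_iff₀ (by norm_num) (by positivity)]
      nlinarith [Real.pi_pos, Real.pi_le_four]
    have h1 : s * t * m ^ 2 ≤ 4 * ((s - t) ^ 2 + s * t * q) := by
      have h2 : m ^ 2 ≤ 4 * q := by
        linarith [mul_le_mul_of_nonneg_right hpi4 (sq_nonneg m)]
      linarith [sq_nonneg (s - t), mul_le_mul_of_nonneg_left h2 hst.le]
    calc P * M = (s * t * m ^ 2) ^ α := by
          rw [hP', hM', Real.mul_rpow hst.le (sq_nonneg _)]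
      _ ≤ (4 * ((s - t) ^ 2 + s * t * q)) ^ α := Real.rpow_le_rpow (by positivity) h1 hα.le
      _ = 4 ^ α * R := by rw [hR', Real.mul_rpow (by norm_num) (by positivity)]
      _ ≤ 4 * R := by
          exact mul_le_mul_of_nonneg_right h4 hR0
  have hRle : R ≤ A + 4 * (P * M) := by
    calc R ≤ ((s - t) ^ 2) ^ α + (s * t * q) ^ α := by
          rw [hR']
          exact Real.rpow_add_le_add_rpow (sq_nonneg _) (by positivity) hα.le hα1
      _ ≤ A + (4 * (s * t * m ^ 2)) ^ α := by
          rw [hA']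
          have h2 : s * t * q ≤ 4 * (s * t * m ^ 2) := by
            linarith [mul_le_mul_of_nonneg_left hq2 hst.le]
          linarith [Real.rpow_le_rpow (mul_nonneg hst.le hq0) h2 hα.le]
      _ = A + 4 ^ α * (P * M) := by
          rw [Real.mul_rpow (by norm_num) (by positivity), Real.mul_rpow hst.le (sq_nonneg _),
            hP', hM']
      _ ≤ A + 4 * (P * M) := by
          linarith [mul_le_mul_of_nonneg_right h4 (mul_nonneg hP0.le hM0)]
  -- the truncation `min 1 d` commutes with the power
  have hmα : m ^ α = min 1 (d ^ α) := by
    rcases le_total d 1 with h | h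
    · rw [hm, min_eq_right h, min_eq_right (Real.rpow_le_one hd h hα.le)]
    · rw [hm, min_eq_left h, Real.one_rpow, min_eq_left (Real.one_le_rpow h hα.le)]
  have hdα : 0 ≤ d ^ α := Real.rpow_nonneg hd α
  have hr0 : 0 ≤ r := hdα.trans hr1
  set G := 1 - Real.exp (-r ^ 2 / 2) with hG
  have hx : -r ^ 2 / 2 = -(r ^ 2 / 2) := by ring
  obtain ⟨hG1, hG2⟩ := one_sub_exp_bounds (x := r ^ 2 / 2) (by positivity)
  rw [← hx, ← hG] at hG1 hG2
  have hGlow : M / 4 ≤ G := by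
    refine le_trans ?_ hG2
    have h1 : m ^ α ≤ 1 := hmα ▸ min_le_left _ _
    have h2 : m ^ α ≤ r := (hmα ▸ min_le_right _ _ : m ^ α ≤ d ^ α).trans hr1
    have h0 : 0 ≤ m ^ α := Real.rpow_nonneg hm0 _
    have h3 : M ≤ 1 := pow_le_one₀ h0 h1
    have h5 : M ≤ r ^ 2 := pow_le_pow_left₀ h0 h2 2
    have : M / 2 ≤ min 1 (r ^ 2 / 2) := le_min (by linarith) (by linarith)
    linarith
  have hGup : G ≤ c ^ 2 * M := by
    rw [hM, hmα]
    rcases le_total (d ^ α) 1 with h | h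
    · rw [min_eq_right h]
      have h1 : r ^ 2 ≤ c ^ 2 * (d ^ α) ^ 2 :=
        (pow_le_pow_left₀ hr0 hr2 2).trans_eq (mul_pow _ _ _)
      linarith [hG1.trans (min_le_right _ _), sq_nonneg r]
    · rw [min_eq_left h]
      linarith [hG1.trans (min_le_left _ _), one_le_pow₀ hc (n := 2)]
  have hNe : N = (s ^ α - t ^ α) ^ 2 + 2 * (P * G) + A := by
    rw [hN, hG]; ring
  have hdiff : (s ^ α - t ^ α) ^ 2 ≤ A := by
    rw [hA]
    refine sq_le_sq' ?_ ?_
    · have := Real.rpow_add_le_add_rpow hs.le (abs_nonneg (s - t)) hα.le hα1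
      have h2 : t ^ α ≤ (s + |s - t|) ^ α :=
        Real.rpow_le_rpow ht.le (by linarith [neg_abs_le (s - t)]) hα.le
      linarith
    · have := Real.rpow_add_le_add_rpow ht.le (abs_nonneg (s - t)) hα.le hα1
      have h2 : s ^ α ≤ (t + |s - t|) ^ α :=
        Real.rpow_le_rpow hs.le (by linarith [le_abs_self (s - t)]) hα.le
      linarith
  have hPG1 : P * (M / 4) ≤ P * G := mul_le_mul_of_nonneg_left hGlow hP0.le
  have hPG2 : P * G ≤ P * (c ^ 2 * M) := mul_le_mul_of_nonneg_left hGup hP0.le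
  have hc2 : 1 ≤ c ^ 2 := one_le_pow₀ hc
  constructor
  · rw [mul_pow, ← hR, hNe]
    linarith [sq_nonneg (s ^ α - t ^ α)]
  · have e : (12 * c * (1 / 3) * ρ ^ α) ^ 2 = 16 * c ^ 2 * R := by rw [hR]; ring
    rw [e, hNe]
    have : c ^ 2 * (P * M) ≤ c ^ 2 * (4 * R) := mul_le_mul_of_nonneg_left hRP (by positivity)
    linarith [mul_le_mul_of_nonneg_right hc2 hR0]

/-! ### The cone kernel and the embedding -/

/-- The kernel on `ℝ × L₂` whose feature map embeds the cone. Absolute values of the radial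
coordinates make it continuous on all of `ℝ × L₂`; only positive radii are used. -/
def coneKernel (α : ℝ) : Matrix (ℝ × L2) (ℝ × L2) ℝ := Matrix.of fun p q =>
  |p.1| ^ α * |q.1| ^ α * Real.exp (-‖p.2 - q.2‖ ^ 2 / 2) +
    1 / 2 * (|p.1| ^ (2 * α) + |q.1| ^ (2 * α) - |p.1 - q.1| ^ (2 * α))

theorem psd_coneKernel {α : ℝ} (h0 : 0 < α) (h1 : α ≤ 1) : (coneKernel α).PosSemidef := by
  have e : coneKernel α =
      (Matrix.of fun p q : ℝ × L2 => |p.1| ^ α * |q.1| ^ α *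
        Real.exp (-‖p.2 - q.2‖ ^ 2 / 2)) +
      (1 / 2 : ℝ) • (Matrix.of fun s t : ℝ =>
        |s| ^ (2 * α) + |t| ^ (2 * α) - |s - t| ^ (2 * α)).submatrix
          (Prod.fst : ℝ × L2 → ℝ) Prod.fst := by
    ext p q
    simp [coneKernel]
  rw [e]
  exact (psd_gauss (fun p : ℝ × L2 => |p.1| ^ α) Prod.snd).add
    (((psd_fbm h0 h1).submatrix _).smul (by norm_num))

/-- A map into `L₂` whose squared distances are
`K(p,p) + K(q,q) - 2 K(p,q)` for the kernel `K = coneKernel α`. -/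
theorem exists_coneMap {α : ℝ} (h0 : 0 < α) (h1 : α ≤ 1) :
    ∃ F : ℝ × L2 → L2, ∀ (s t : ℝ) (u v : L2), 0 < s → 0 < t →
      dist (F (s, u)) (F (t, v)) ^ 2 = (s ^ α) ^ 2 + (t ^ α) ^ 2 -
        2 * (s ^ α * t ^ α * Real.exp (-dist u v ^ 2 / 2)) + (|s - t| ^ α) ^ 2 := by
  have hcont : ∀ β : ℝ, 0 < β → Continuous fun x : ℝ => |x| ^ β := fun β hβ =>
    continuous_abs.rpow_const fun _ => Or.inr hβ.le
  have hc : Continuous fun p : (ℝ × L2) × (ℝ × L2) => coneKernel α p.1 p.2 := by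
    have c1 := hcont α h0
    have c2 := hcont (2 * α) (by linarith)
    simp only [coneKernel, Matrix.of_apply]
    have e1 := c1.comp (continuous_fst.comp (continuous_fst (X := ℝ × L2) (Y := ℝ × L2)))
    have e2 := c1.comp (continuous_fst.comp (continuous_snd (X := ℝ × L2) (Y := ℝ × L2)))
    have f1 := c2.comp (continuous_fst.comp (continuous_fst (X := ℝ × L2) (Y := ℝ × L2)))
    have f2 := c2.comp (continuous_fst.comp (continuous_snd (X := ℝ × L2) (Y := ℝ × L2)))
    have f3 := c2.comp ((continuous_fst.comp (continuous_fst (X := ℝ × L2) (Y := ℝ × L2))).sub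
      (continuous_fst.comp (continuous_snd (X := ℝ × L2) (Y := ℝ × L2))))
    have g : Continuous fun p : (ℝ × L2) × (ℝ × L2) =>
        Real.exp (-‖p.1.2 - p.2.2‖ ^ 2 / 2) := by fun_prop
    exact ((e1.mul e2).mul g).add (continuous_const.mul ((f1.add f2).sub f3))
  obtain ⟨F, hF⟩ := exists_map_L2 (coneKernel α) (psd_coneKernel h0 h1) hc
  refine ⟨F, fun s t u v hs ht => ?_⟩
  have hp : ∀ x : ℝ, |x| ^ (2 * α) = (|x| ^ α) ^ 2 := fun x => by
    rw [mul_comm, Real.rpow_mul (abs_nonneg x), Real.rpow_two]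
  rw [hF, dist_eq_norm]
  simp only [coneKernel, Matrix.of_apply, sub_self, hp, abs_of_pos hs, abs_of_pos ht, abs_zero,
    Real.zero_rpow h0.ne', norm_zero]
  simp
  ring

theorem statement10 :
    ∃ C : ℝ, 0 < C ∧
      ∀ (X : Type*) [MetricSpace X] [TopologicalSpace.SeparableSpace X]
        (α : ℝ), 0 < α → α ≤ 1 →
        distortion (fun p q : Cone X => coneD (dist : X → X → ℝ) p q ^ α)
            (dist : L2 → L2 → ℝ) ≤
          ENNReal.ofReal C *
            distortion (fun x y : X => dist x y ^ α) (dist : L2 → L2 → ℝ) := by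
  refine ⟨12, by norm_num, fun X _ _ α h0 h1 => ?_⟩
  obtain ⟨F, hF⟩ := exists_coneMap h0 h1
  simp only [distortion]
  rw [sInf_eq_iInf' {D : ℝ≥0∞ | ∃ c : ℝ, 1 ≤ c ∧ D = ENNReal.ofReal c ∧
      ∃ (s : ℝ) (f : X → L2), 0 < s ∧ ∀ x y : X,
        s * dist x y ^ α ≤ dist (f x) (f y) ∧ dist (f x) (f y) ≤ c * s * dist x y ^ α},
    ENNReal.mul_iInf_of_ne (by simp) (by simp)]
  refine le_iInf ?_
  rintro ⟨_, c, hc, rfl, σ, f, hσ, hf⟩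
  refine sInf_le ⟨12 * c, by linarith, (ENNReal.ofReal_mul (by norm_num)).symm, 1 / 3,
    fun p => F (p.1.1, σ⁻¹ • f p.1.2), by norm_num, fun p q => ?_⟩
  obtain ⟨⟨s, x⟩, hs⟩ := p
  obtain ⟨⟨t, y⟩, ht⟩ := q
  have hs : 0 < s := hs
  have ht : 0 < t := ht
  have hr : dist (σ⁻¹ • f x) (σ⁻¹ • f y) = σ⁻¹ * dist (f x) (f y) := by
    rw [dist_smul₀, Real.norm_of_nonneg (inv_nonneg.2 hσ.le)]
  obtain ⟨hf1, hf2⟩ := hf x y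
  obtain ⟨hlow, hup⟩ := cone_estimate (r := dist (σ⁻¹ • f x) (σ⁻¹ • f y)) hs ht
    (dist_nonneg (x := x) (y := y)) h0 h1 hc
    (by rw [hr, le_inv_mul_iff₀ hσ]; exact hf1)
    (by rw [hr, inv_mul_le_iff₀ hσ]; linarith) rfl (hF s t (σ⁻¹ • f x) (σ⁻¹ • f y) hs ht)
  have hρ : 0 ≤ coneDist (dist : X → X → ℝ) (s, x) (t, y) ^ α :=
    Real.rpow_nonneg (Real.sqrt_nonneg _) _
  exact ⟨(sq_le_sq₀ (mul_nonneg (by norm_num) hρ) dist_nonneg).1 hlow, (sq_le_sq₀ dist_nonneg (mul_nonneg (by linarith) hρ)).1 hup⟩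

end
end

section
/- There is a universal constant C ∈ (0,∞) such that the following holds. Fix d,n ∈ ℕ and let G be a d-regular graph on n vertices (parallel edges and self-loops allowed) with λ₂(G) < 1. Then γ(G, d_{L_1}²) ≤ C/(1 − λ₂(G))², where d_{L_1}(f,g) = ‖f−g‖₁ is the norm metric on L_1. -/
/-!
The proof passes from the exponent two for real-valued functions, to the exponent one for
`L₁`-valued functions, and back to the exponent two by Matoušek extrapolation.

* The Rayleigh quotient bound `lambda2_rayleigh` gives the classical Poincaré inequality
  `c ∑ᵤᵥ (xᵤ - xᵥ)² ≤ ∑ᵤᵥ E(u,v) (xᵤ - xᵥ)²` with `c = (1 - λ₂) d / n` (`poincare_sq`).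
* Applied to the indicators `1_{xᵤ < s}` and integrated over `s`, it becomes the same inequality
  for `|xᵤ - xᵥ|` (`poincare_abs`); one more integration gives it for the norm of `L₁`
  (`poincare_norm_L1`).
* In any normed space the map `x ↦ ‖x‖ x` satisfies
  `‖x - y‖² ≤ 4 ‖‖x‖ x - ‖y‖ y‖ ≤ 4 (‖x‖ + ‖y‖) ‖x - y‖`. If `f` is translated so that
  `n ∑ᵤ ‖f u‖² ≤ T := ∑ᵤᵥ ‖f u - f v‖²`, the first-moment inequality for `‖f‖ f` and a weighted
  Cauchy–Schwarz inequality give `T ≤ 64 n / ((1 - λ₂)² d) · ∑ᵤᵥ E(u,v) ‖f u - f v‖²`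
  (`extrapolation`). The two factors `1 / (1 - λ₂)` come from the first-moment inequality and from
  absorbing `∑ᵤ ‖f u‖²`.
-/

/-!
Statement 14 (Lemma 4.4 of Mendel–Naor, Matoušek extrapolation): there is a
universal constant `C` such that every `d`-regular multigraph `G` on `n` vertices
with `λ₂(G) < 1` satisfies `γ(G, d_{L₁}²) ≤ C/(1 − λ₂(G))²`.

Multigraphs on a finite vertex type are encoded by symmetric edge multiplicity
matrices `E : V → V → ℕ`. For a symmetric stochastic matrix (such as the
normalized adjacency matrix of a regular graph), the second largest eigenvalue is
given by the Rayleigh quotient characterization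
`λ₂(A) = sup{⟨Ax,x⟩/⟨x,x⟩ : x ≠ 0, ∑ᵢ xᵢ = 0}`, which we take as the definition.
-/

open ENNReal MeasureTheory

noncomputable section

/-- `L₁ = L₁([0,1])`. -/
abbrev L1 : Type :=
  Lp ℝ 1 (volume.restrict (Set.Icc (0 : ℝ) 1))

/-- The squared distance, valued in `ℝ≥0∞`. -/
def sqd {Z : Type*} (dZ : Z → Z → ℝ) (a b : Z) : ℝ≥0∞ :=
  ENNReal.ofReal (dZ a b) ^ 2

/-- The number of edges (counted with multiplicity, a self-loop counted once). -/
def numEdges {V : Type*} [Fintype V] (E : V → V → ℕ) : ℝ≥0∞ :=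
  (((∑ u : V, ∑ v : V, E u v) + ∑ u : V, E u u : ℕ) : ℝ≥0∞) / 2

/-- The nonlinear spectral gap quantity `γ(G, d_Z²)`. -/
def gammaG {V Z : Type*} [Fintype V] (E : V → V → ℕ) (dZ : Z → Z → ℝ) : ℝ≥0∞ :=
  sInf {γ : ℝ≥0∞ | ∀ f : V → Z,
    (∑ u : V, ∑ v : V, sqd dZ (f u) (f v)) / (Fintype.card V : ℝ≥0∞) ^ 2 ≤
      γ / numEdges E * ((∑ u : V, ∑ v : V, (E u v : ℝ≥0∞) * sqd dZ (f u) (f v)) / 2)}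

/-- The second largest eigenvalue of a symmetric stochastic matrix, via the
Rayleigh quotient over mean-zero vectors. -/
def lambda2 {k : ℕ} (A : Matrix (Fin k) (Fin k) ℝ) : ℝ :=
  sSup {r : ℝ | ∃ x : Fin k → ℝ, x ≠ 0 ∧ (∑ i, x i) = 0 ∧
    r = (∑ i, ∑ j, A i j * x i * x j) / ∑ i, x i ^ 2}

/-- The normalized adjacency matrix of a `d`-regular multigraph. -/
def normAdj {k : ℕ} (E : Fin k → Fin k → ℕ) (d : ℕ) : Matrix (Fin k) (Fin k) ℝ :=
  Matrix.of fun u v => (E u v : ℝ) / d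

/-- The map `x ↦ ‖x‖ x` of a normed space, which turns first powers of distances into squares. -/
def normSmul {F : Type*} [NormedAddCommGroup F] [NormedSpace ℝ F] (x : F) : F := ‖x‖ • x

theorem norm_normSmul_sub_le {F : Type*} [NormedAddCommGroup F] [NormedSpace ℝ F] (x y : F) :
    ‖normSmul x - normSmul y‖ ≤ (‖x‖ + ‖y‖) * ‖x - y‖ := by
  have h : normSmul x - normSmul y = ‖x‖ • (x - y) + (‖x‖ - ‖y‖) • y := by
    simp only [normSmul]; module
  have h1 := abs_norm_sub_norm_le x y
  calc ‖normSmul x - normSmul y‖ ≤ ‖x‖ * ‖x - y‖ + |‖x‖ - ‖y‖| * ‖y‖ := by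
        rw [h]; refine (norm_add_le _ _).trans ?_
        rw [norm_smul, norm_smul, norm_norm, Real.norm_eq_abs]
    _ ≤ _ := by nlinarith [norm_nonneg y]

theorem sq_norm_sub_le_normSmul {F : Type*} [NormedAddCommGroup F] [NormedSpace ℝ F] (x y : F) :
    ‖x - y‖ ^ 2 ≤ 4 * ‖normSmul x - normSmul y‖ := by
  wlog hxy : ‖y‖ ≤ ‖x‖ generalizing x y
  · rw [norm_sub_rev x y, norm_sub_rev (normSmul x)]
    exact this y x (le_of_not_ge hxy)
  have h1 : ‖x‖ * ‖x - y‖ ≤ ‖normSmul x - normSmul y‖ + (‖x‖ - ‖y‖) * ‖y‖ := by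
    have h : ‖x‖ • (x - y) = (normSmul x - normSmul y) - (‖x‖ - ‖y‖) • y := by
      simp only [normSmul]; module
    calc ‖x‖ * ‖x - y‖ = ‖‖x‖ • (x - y)‖ := by rw [norm_smul, norm_norm]
      _ ≤ ‖normSmul x - normSmul y‖ + ‖(‖x‖ - ‖y‖) • y‖ := by rw [h]; exact norm_sub_le _ _
      _ = _ := by rw [norm_smul, Real.norm_of_nonneg (sub_nonneg.2 hxy)]
  have h2 : ‖x‖ * ‖x‖ - ‖y‖ * ‖y‖ ≤ ‖normSmul x - normSmul y‖ := by
    have := norm_sub_norm_le (normSmul x) (normSmul y)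
    simpa [normSmul, norm_smul] using this
  have h3 := norm_sub_le x y
  have hy := norm_nonneg y
  have ht := norm_nonneg (x - y)
  -- Both cases give `‖x‖ ‖x - y‖ ≤ 2 ‖normSmul x - normSmul y‖`.
  have h4 : ‖x‖ * ‖x - y‖ ≤ 2 * ‖normSmul x - normSmul y‖ := by
    rcases le_total (2 * (‖x‖ - ‖y‖)) ‖x - y‖ with h | h
    · nlinarith
    · nlinarith
  nlinarith

section Graph

variable {n d : ℕ} {E : Fin n → Fin n → ℕ}

theorem sum_mul_left (hr : ∀ u, ∑ v, E u v = d) (g : Fin n → ℝ) :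
    ∑ u, ∑ v, (E u v : ℝ) * g u = d * ∑ u, g u := by
  rw [Finset.mul_sum]
  refine Finset.sum_congr rfl fun u _ => ?_
  rw [← Finset.sum_mul, ← hr u]; push_cast; rfl

theorem sum_mul_right (hs : ∀ u v, E u v = E v u) (hr : ∀ u, ∑ v, E u v = d) (g : Fin n → ℝ) :
    ∑ u, ∑ v, (E u v : ℝ) * g v = d * ∑ u, g u := by
  rw [Finset.sum_comm, ← sum_mul_left hr]
  exact Finset.sum_congr rfl fun u _ => Finset.sum_congr rfl fun v _ => by rw [hs]

theorem sum_mul_sub_sq (hs : ∀ u v, E u v = E v u) (hr : ∀ u, ∑ v, E u v = d) (x : Fin n → ℝ) :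
    ∑ u, ∑ v, (E u v : ℝ) * (x u - x v) ^ 2 =
      2 * d * ∑ u, x u ^ 2 - 2 * ∑ u, ∑ v, (E u v : ℝ) * x u * x v := by
  have h1 := sum_mul_left hr fun u => x u ^ 2
  have h2 := sum_mul_right hs hr fun u => x u ^ 2
  have : ∑ u, ∑ v, (E u v : ℝ) * (x u - x v) ^ 2 =
      ∑ u, ∑ v, (E u v : ℝ) * x u ^ 2 + ∑ u, ∑ v, (E u v : ℝ) * x v ^ 2
        - 2 * ∑ u, ∑ v, (E u v : ℝ) * x u * x v := by
    simp only [Finset.mul_sum, ← Finset.sum_add_distrib, ← Finset.sum_sub_distrib]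
    exact Finset.sum_congr rfl fun u _ => Finset.sum_congr rfl fun v _ => by ring
  rw [this, h1, h2]; ring

/-- The supremum defining `lambda2` is over a set bounded above by `1`, hence it does bound all
Rayleigh quotients. -/
theorem lambda2_rayleigh (hd : 0 < d) (hs : ∀ u v, E u v = E v u) (hr : ∀ u, ∑ v, E u v = d)
    (x : Fin n → ℝ) (hx : ∑ u, x u = 0) :
    ∑ u, ∑ v, (E u v : ℝ) * x u * x v ≤ lambda2 (normAdj E d) * d * ∑ u, x u ^ 2 := by
  have hd' : (0 : ℝ) < d := by exact_mod_cast hd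
  have key : ∀ y : Fin n → ℝ, ∑ u, ∑ v, normAdj E d u v * y u * y v =
      (∑ u, ∑ v, (E u v : ℝ) * y u * y v) / d := fun y => by
    simp only [Finset.sum_div, normAdj, Matrix.of_apply]
    exact Finset.sum_congr rfl fun u _ => Finset.sum_congr rfl fun v _ => by ring
  by_cases h0 : x = 0
  · simp [h0]
  have pos : ∀ y : Fin n → ℝ, y ≠ 0 → 0 < ∑ u, y u ^ 2 := fun y hy => by
    obtain ⟨i, hi⟩ := Function.ne_iff.1 hy
    exact Finset.sum_pos' (fun _ _ => sq_nonneg _) ⟨i, Finset.mem_univ _, by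
      have : y i ≠ 0 := hi
      positivity⟩
  have hb : (∑ u, ∑ v, normAdj E d u v * x u * x v) / ∑ u, x u ^ 2 ≤ lambda2 (normAdj E d) := by
    refine le_csSup ⟨1, ?_⟩ ⟨x, h0, hx, rfl⟩
    rintro r ⟨y, hy, -, rfl⟩
    rw [div_le_one (pos y hy), key, div_le_iff₀ hd']
    have h1 := sum_mul_sub_sq hs hr y
    have h2 : 0 ≤ ∑ u, ∑ v, (E u v : ℝ) * (y u - y v) ^ 2 := by positivity
    nlinarith
  rw [div_le_iff₀ (pos x h0), key, div_le_iff₀ hd'] at hb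
  linarith

theorem poincare_sq (hn : 0 < n) (hd : 0 < d) (hs : ∀ u v, E u v = E v u)
    (hr : ∀ u, ∑ v, E u v = d) (x : Fin n → ℝ) :
    (1 - lambda2 (normAdj E d)) * d / n * ∑ u, ∑ v, (x u - x v) ^ 2 ≤
      ∑ u, ∑ v, (E u v : ℝ) * (x u - x v) ^ 2 := by
  have hn' : (0 : ℝ) < n := by exact_mod_cast hn
  -- Both sides are unchanged when the mean is subtracted.
  wlog hx : ∑ u, x u = 0 generalizing x
  · have := this (fun u => x u - (∑ w, x w) / n) (by
      simp [Finset.sum_sub_distrib]; field_simp; simp)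
    simpa using this
  have h1 := sum_mul_sub_sq hs hr x
  have h2 := lambda2_rayleigh hd hs hr x hx
  have h3 : ∑ u, ∑ v, (x u - x v) ^ 2 = 2 * n * ∑ u, x u ^ 2 := by
    have h : ∀ u v, (x u - x v) ^ 2 = x u ^ 2 + x v ^ 2 - 2 * x u * x v := fun u v => by ring
    simp only [h, Finset.sum_add_distrib, Finset.sum_sub_distrib, ← Finset.mul_sum, hx]
    simp [← Finset.mul_sum]; ring
  rw [h3, h1]
  have h4 : (1 - lambda2 (normAdj E d)) * d / n * (2 * n * ∑ u, x u ^ 2) =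
      2 * ((1 - lambda2 (normAdj E d)) * d * ∑ u, x u ^ 2) := by field_simp
  rw [h4]; linarith

/-- Integration of an inequality between two weighted sums over pairs. -/
theorem integral_sum_pairs_le {α : Type*} [MeasurableSpace α] {μ : Measure α} (c : ℝ)
    (F : Fin n → Fin n → α → ℝ) (hF : ∀ u v, Integrable (F u v) μ)
    (h : ∀ s, c * ∑ u, ∑ v, F u v s ≤ ∑ u, ∑ v, (E u v : ℝ) * F u v s) :
    c * ∑ u, ∑ v, ∫ s, F u v s ∂μ ≤ ∑ u, ∑ v, (E u v : ℝ) * ∫ s, F u v s ∂μ := by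
  have h1 : Integrable (fun s => ∑ u, ∑ v, F u v s) μ :=
    integrable_finsetSum _ fun u _ => integrable_finsetSum _ fun v _ => hF u v
  have h2 : Integrable (fun s => ∑ u, ∑ v, (E u v : ℝ) * F u v s) μ :=
    integrable_finsetSum _ fun u _ => integrable_finsetSum _ fun v _ => (hF u v).const_mul _
  have h3 := integral_mono (h1.const_mul c) h2 h
  rw [integral_const_mul, integral_finsetSum _ fun u _ => integrable_finsetSum _ fun v _ => hF u v,
    integral_finsetSum _ fun u _ => integrable_finsetSum _ fun v _ => (hF u v).const_mul _] at h3
  refine le_of_eq_of_le ?_ (h3.trans_eq ?_)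
  · congr 1
    exact Finset.sum_congr rfl fun u _ => (integral_finsetSum _ fun v _ => hF u v).symm
  · refine Finset.sum_congr rfl fun u _ => ?_
    rw [integral_finsetSum _ fun v _ => (hF u v).const_mul _]
    exact Finset.sum_congr rfl fun v _ => integral_const_mul _ _

theorem poincare_abs (hn : 0 < n) (hd : 0 < d) (hs : ∀ u v, E u v = E v u)
    (hr : ∀ u, ∑ v, E u v = d) (x : Fin n → ℝ) :
    (1 - lambda2 (normAdj E d)) * d / n * ∑ u, ∑ v, |x u - x v| ≤
      ∑ u, ∑ v, (E u v : ℝ) * |x u - x v| := by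
  have hint : ∀ u v, ∫ s, (Set.uIoc (x v) (x u)).indicator (fun _ => (1 : ℝ)) s = |x u - x v| :=
    fun u v => by
      rw [integral_indicator measurableSet_uIoc]
      simp [Set.uIoc, measureReal_def, max_sub_min_eq_abs]
  have hF : ∀ u v, Integrable ((Set.uIoc (x v) (x u)).indicator (fun _ => (1 : ℝ))) volume :=
    fun u v => (integrable_indicator_iff measurableSet_uIoc).2 (by simp [Set.uIoc])
  have h := integral_sum_pairs_le (E := E) (μ := volume) ((1 - lambda2 (normAdj E d)) * d / n)
    (fun u v => (Set.uIoc (x v) (x u)).indicator (fun _ => (1 : ℝ))) hF fun s => by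
      have h := poincare_sq hn hd hs hr fun u => if x u < s then (1 : ℝ) else 0
      have e : ∀ u v, ((if x u < s then (1 : ℝ) else 0) - if x v < s then (1 : ℝ) else 0) ^ 2 =
          (Set.uIoc (x v) (x u)).indicator (fun _ => (1 : ℝ)) s := fun u v => by
        classical
        rw [Set.indicator_apply]
        simp only [Set.mem_uIoc]
        split_ifs <;> norm_num <;> grind
      simpa only [e] using h
  simpa only [hint] using h

theorem poincare_norm_L1 (hn : 0 < n) (hd : 0 < d) (hs : ∀ u v, E u v = E v u)
    (hr : ∀ u, ∑ v, E u v = d) (f : Fin n → L1) :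
    (1 - lambda2 (normAdj E d)) * d / n * ∑ u, ∑ v, ‖f u - f v‖ ≤
      ∑ u, ∑ v, (E u v : ℝ) * ‖f u - f v‖ := by
  have hint : ∀ u v, ∫ s, |f u s - f v s| ∂(volume.restrict (Set.Icc (0 : ℝ) 1)) =
      ‖f u - f v‖ := fun u v => by
    rw [L1.norm_eq_integral_norm]
    refine integral_congr_ae ?_
    filter_upwards [Lp.coeFn_sub (f u) (f v)] with s h
    rw [h, Pi.sub_apply, Real.norm_eq_abs]
  have h := integral_sum_pairs_le (E := E) ((1 - lambda2 (normAdj E d)) * d / n)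
    (fun u v s => |f u s - f v s|)
    (fun u v => ((L1.integrable_coeFn (f u)).sub (L1.integrable_coeFn (f v))).abs)
    fun s => poincare_abs hn hd hs hr fun u => f u s
  simpa only [hint] using h

/-- Matoušek extrapolation from the exponent one to the exponent two. -/
theorem extrapolation {F : Type*} [NormedAddCommGroup F] [NormedSpace ℝ F]
    (hn : 0 < n) (hd : 0 < d) (hs : ∀ u v, E u v = E v u) (hr : ∀ u, ∑ v, E u v = d)
    {g : ℝ} (hg : 0 < g)
    (hP : ∀ f : Fin n → F, g * d / n * ∑ u, ∑ v, ‖f u - f v‖ ≤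
      ∑ u, ∑ v, (E u v : ℝ) * ‖f u - f v‖) (f : Fin n → F) :
    ∑ u, ∑ v, ‖f u - f v‖ ^ 2 ≤
      64 * n / (g ^ 2 * d) * ∑ u, ∑ v, (E u v : ℝ) * ‖f u - f v‖ ^ 2 := by
  have hn' : (0 : ℝ) < n := by exact_mod_cast hn
  have hd' : (0 : ℝ) < d := by exact_mod_cast hd
  -- By averaging over `w`, some translate `f - f w` has `n ∑ᵤ ‖f u - f w‖² ≤ ∑ᵤᵥ ‖f u - f v‖²`.
  wlog hf : n * ∑ u, ‖f u‖ ^ 2 ≤ ∑ u, ∑ v, ‖f u - f v‖ ^ 2 generalizing f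
  · have hne : Nonempty (Fin n) := ⟨⟨0, hn⟩⟩
    obtain ⟨w, -, hw⟩ := Finset.exists_le_of_sum_le (s := (Finset.univ : Finset (Fin n)))
      (f := fun w => n * ∑ u, ‖f u - f w‖ ^ 2)
      (g := fun _ => ∑ u, ∑ v, ‖f u - f v‖ ^ 2) Finset.univ_nonempty (by
        rw [← Finset.mul_sum, Finset.sum_comm]; simp)
    simpa using this (fun u => f u - f w) (by simpa using hw)
  set T := ∑ u, ∑ v, ‖f u - f v‖ ^ 2 with hT
  set D := ∑ u, ∑ v, (E u v : ℝ) * ‖f u - f v‖ ^ 2 with hD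
  have h1 : T ≤ 4 * ∑ u, ∑ v, ‖normSmul (f u) - normSmul (f v)‖ := by
    simp only [hT, Finset.mul_sum]
    exact Finset.sum_le_sum fun u _ => Finset.sum_le_sum fun v _ => sq_norm_sub_le_normSmul _ _
  have h2 := hP fun u => normSmul (f u)
  -- The parameter `g / 16` makes the first term absorbable into `T`.
  have h3 : ∑ u, ∑ v, (E u v : ℝ) * ‖normSmul (f u) - normSmul (f v)‖ ≤
      g / 16 * (2 * d * ∑ u, ‖f u‖ ^ 2) + 8 / g * D := by
    have e1 := sum_mul_left hr fun u => ‖f u‖ ^ 2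
    have e2 := sum_mul_right hs hr fun u => ‖f u‖ ^ 2
    have e3 : g / 16 * (2 * d * ∑ u, ‖f u‖ ^ 2) + 8 / g * D =
        ∑ u, ∑ v, (g / 16 * ((E u v : ℝ) * ‖f u‖ ^ 2) + g / 16 * ((E u v : ℝ) * ‖f v‖ ^ 2)
          + 8 / g * ((E u v : ℝ) * ‖f u - f v‖ ^ 2)) := by
      simp only [Finset.sum_add_distrib, ← Finset.mul_sum, e1, e2, hD]; ring
    rw [e3]
    refine Finset.sum_le_sum fun u _ => Finset.sum_le_sum fun v _ => ?_
    have a1 := norm_normSmul_sub_le (f u) (f v)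
    have a2 : (‖f u‖ + ‖f v‖) * ‖f u - f v‖ ≤
        g / 16 * ‖f u‖ ^ 2 + g / 16 * ‖f v‖ ^ 2 + 8 / g * ‖f u - f v‖ ^ 2 := by
      have : g / 16 * ‖f u‖ ^ 2 + g / 16 * ‖f v‖ ^ 2 + 8 / g * ‖f u - f v‖ ^ 2
          - (‖f u‖ + ‖f v‖) * ‖f u - f v‖ =
          ((g * ‖f u‖ - 8 * ‖f u - f v‖) ^ 2 + (g * ‖f v‖ - 8 * ‖f u - f v‖) ^ 2) / (16 * g) := by
        field_simp; ring
      have : 0 ≤ ((g * ‖f u‖ - 8 * ‖f u - f v‖) ^ 2 + (g * ‖f v‖ - 8 * ‖f u - f v‖) ^ 2)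
        / (16 * g) := by positivity
      linarith
    have := mul_le_mul_of_nonneg_left (a1.trans a2) (Nat.cast_nonneg (α := ℝ) (E u v))
    linarith
  have h4 : ∑ u, ‖f u‖ ^ 2 ≤ T / n := by rw [le_div_iff₀ hn']; linarith
  have h5 : g * d / n * T ≤ 4 * (g / 16 * (2 * d * (T / n)) + 8 / g * D) := by
    calc g * d / n * T ≤ g * d / n * (4 * ∑ u, ∑ v, ‖normSmul (f u) - normSmul (f v)‖) := by gcongr
      _ = 4 * (g * d / n * ∑ u, ∑ v, ‖normSmul (f u) - normSmul (f v)‖) := by ring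
      _ ≤ 4 * (g / 16 * (2 * d * ∑ u, ‖f u‖ ^ 2) + 8 / g * D) := by
        gcongr; exact h2.trans h3
      _ ≤ _ := by gcongr
  have h6 : g * d / (2 * n) * T ≤ 32 / g * D := by
    have : g * d / (2 * n) * T = g * d / n * T - 4 * (g / 16 * (2 * d * (T / n))) := by
      field_simp; ring
    rw [this]; linarith [show 4 * (8 / g * D) = 32 / g * D by ring]
  calc T = 2 * n / (g * d) * (g * d / (2 * n) * T) := by field_simp
    _ ≤ 2 * n / (g * d) * (32 / g * D) := by gcongr
    _ = _ := by field_simp; ring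

end Graph

/-- (The hypothesis `0 < d` is needed for the normalized adjacency
matrix, and hence `λ₂(G)`, to be defined.) -/
theorem statement14 :
    ∃ C : ℝ, 0 < C ∧
      ∀ (d n : ℕ), 0 < d →
        ∀ E : Fin n → Fin n → ℕ,
          (∀ u v, E u v = E v u) → (∀ u, ∑ v, E u v = d) →
          lambda2 (normAdj E d) < 1 →
          gammaG E (dist : L1 → L1 → ℝ) ≤
            ENNReal.ofReal (C / (1 - lambda2 (normAdj E d)) ^ 2) := by
  refine ⟨128, by norm_num, fun d n hd E hs hr hl => sInf_le fun f => ?_⟩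
  rcases Nat.eq_zero_or_pos n with rfl | hn
  · simp
  have hn' : (0 : ℝ) < n := by exact_mod_cast hn
  have hd' : (0 : ℝ) < d := by exact_mod_cast hd
  set g := 1 - lambda2 (normAdj E d) with hg
  have hg0 : 0 < g := by linarith
  have hT := extrapolation hn hd hs hr hg0 (fun f => poincare_norm_L1 hn hd hs hr f) f
  set D := ∑ u, ∑ v, (E u v : ℝ) * ‖f u - f v‖ ^ 2 with hD
  have hD0 : 0 ≤ D := by positivity
  have hsq : ∀ u v, sqd (dist : L1 → L1 → ℝ) (f u) (f v) = ENNReal.ofReal (‖f u - f v‖ ^ 2) :=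
    fun u v => by rw [sqd, dist_eq_norm, ENNReal.ofReal_pow (norm_nonneg _)]
  have eT : ∑ u, ∑ v, sqd (dist : L1 → L1 → ℝ) (f u) (f v) =
      ENNReal.ofReal (∑ u, ∑ v, ‖f u - f v‖ ^ 2) := by
    simp only [hsq]
    rw [ENNReal.ofReal_sum_of_nonneg fun u _ => by positivity]
    exact Finset.sum_congr rfl fun u _ =>
      (ENNReal.ofReal_sum_of_nonneg fun v _ => by positivity).symm
  have eD : ∑ u, ∑ v, (E u v : ℝ≥0∞) * sqd (dist : L1 → L1 → ℝ) (f u) (f v) =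
      ENNReal.ofReal D := by
    simp only [hsq, hD]
    rw [ENNReal.ofReal_sum_of_nonneg fun u _ => by positivity]
    refine Finset.sum_congr rfl fun u _ => ?_
    rw [ENNReal.ofReal_sum_of_nonneg fun v _ => by positivity]
    refine Finset.sum_congr rfl fun v _ => ?_
    rw [ENNReal.ofReal_mul (Nat.cast_nonneg _), ENNReal.ofReal_natCast]
  -- Self-loops are counted once, so there are between `n d / 2` and `n d` edges.
  have hN : numEdges E ≤ ENNReal.ofReal (n * d) := by
    have h1 : ∑ u, ∑ v, E u v = n * d := by simp [hr]
    have h2 : ∑ u, E u u ≤ n * d := by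
      rw [← h1]
      exact Finset.sum_le_sum fun u _ =>
        Finset.single_le_sum (f := fun v => E u v) (fun _ _ => Nat.zero_le _) (Finset.mem_univ u)
    have h3 : ENNReal.ofReal (n * d) = ((n * d : ℕ) : ℝ≥0∞) := by
      rw [← ENNReal.ofReal_natCast]; push_cast; rfl
    rw [numEdges, h1, h3]
    refine ENNReal.div_le_of_le_mul ?_
    rw [mul_two]
    exact_mod_cast Nat.add_le_add_left h2 _
  have two : (2 : ℝ≥0∞) = ENNReal.ofReal 2 := by simp
  have card : (Fintype.card (Fin n) : ℝ≥0∞) ^ 2 = ENNReal.ofReal ((n : ℝ) ^ 2) := by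
    rw [Fintype.card_fin, ENNReal.ofReal_pow hn'.le, ENNReal.ofReal_natCast]
  calc (∑ u, ∑ v, sqd (dist : L1 → L1 → ℝ) (f u) (f v)) / (Fintype.card (Fin n) : ℝ≥0∞) ^ 2
      ≤ ENNReal.ofReal (128 / g ^ 2) / ENNReal.ofReal (n * d) * (ENNReal.ofReal D / 2) := by
        rw [eT, card, two, ← ENNReal.ofReal_div_of_pos (by positivity),
          ← ENNReal.ofReal_div_of_pos (by positivity), ← ENNReal.ofReal_div_of_pos (by positivity),
          ← ENNReal.ofReal_mul (by positivity)]
        refine ENNReal.ofReal_le_ofReal ?_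
        rw [div_le_iff₀ (by positivity)]
        refine hT.trans_eq ?_
        field_simp; ring
    _ ≤ _ := by
        rw [eD]; gcongr

end
end

section
/- Fix δ ∈ (0,1) and let G be a connected simple graph that is (1+δ)-sparse. If C₁, C₂ ⊆ V_G are distinct cycles of G, then d_G(C₁,C₂) ≥ 1 + 1/δ − |C₁| − |C₂|, where d_G(C₁,C₂) = min{d_G(u,v) : u ∈ C₁, v ∈ C₂} and d_G is the shortest-path metric of G. -/
/-!
Let `S` be the union of the two cycles with the vertices of a geodesic from `u` to `v`.  A geodesic
contributes at most `d(u, v) - 1` vertices outside the cycles, so `|S| ≤ |C₁| + |C₂| + d(u, v) - 1`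
(this remains correct when `u = v`, the cycles then sharing a vertex).  The graph induced on `S` is
connected and contains two cycles with different vertex sets, hence different edge sets.  Deleting
an edge that lies on one cycle only, and then an edge of the other cycle, leaves the graph
connected, so it has at least `|S| + 1` edges (`card_add_one_le_of_two_cycles`).  Sparsity gives
`|S| + 1 ≤ (1 + δ) |S|`, that is `1 / δ ≤ |S|`.
-/

/-!
Statement 17 (Lemma 6.7 of Mendel–Naor): in a connected `(1+δ)`-sparse simple graph,
distinct cycles `C₁, C₂` satisfy `d_G(C₁, C₂) ≥ 1 + 1/δ − |C₁| − |C₂|`.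
-/

/-- `C` is (the vertex set of) a cycle of the simple graph `G`. -/
def IsCycleSet {V : Type*} (G : SimpleGraph V) (C : Set V) : Prop :=
  ∃ (k : ℕ) (x : ℕ → V), 3 ≤ k ∧ Set.InjOn x (Set.Iio k) ∧ C = x '' Set.Iio k ∧
    ∀ i < k, G.Adj (x i) (x ((i + 1) % k))

/-- `E_G(S)`: the set of edges of `G` with both endpoints in `S`. -/
def edgesIn {V : Type*} (G : SimpleGraph V) (S : Set V) : Set (Sym2 V) :=
  {e ∈ G.edgeSet | ∀ v ∈ e, v ∈ S}

/-- `G` is `(1+δ)`-sparse: `|E_G(S)| ≤ (1+δ)|S|` for every `S ⊆ V_G`. -/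
def IsSparse {V : Type*} (G : SimpleGraph V) (δ : ℝ) : Prop :=
  ∀ S : Set V, ((edgesIn G S).ncard : ℝ) ≤ (1 + δ) * S.ncard

/-- `y` runs periodically around a cycle of length `k` in `G`.  Indexing by all naturals, with
`y m = y n` exactly when `m ≡ n` modulo `k`, avoids a separate closing edge. -/
structure IsPeriodicCycle {V : Type*} (G : SimpleGraph V) (k : ℕ) (y : ℕ → V) : Prop where
  three_le : 3 ≤ k
  adj : ∀ n, G.Adj (y n) (y (n + 1))
  eq_iff : ∀ m n, y m = y n ↔ m ≡ n [MOD k]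

theorem IsCycleSet.exists_periodic {V : Type*} {G : SimpleGraph V} {C : Set V}
    (h : IsCycleSet G C) : ∃ k y, IsPeriodicCycle G k y ∧ Set.range y = C := by
  obtain ⟨k, x, hk, hinj, rfl, hadj⟩ := h
  have hpos : 0 < k := by omega
  refine ⟨k, fun n => x (n % k), ⟨hk, fun n => ?_, fun m n => ?_⟩, ?_⟩
  · have := hadj (n % k) (Nat.mod_lt _ hpos)
    rwa [Nat.mod_add_mod] at this
  · exact ⟨fun h => hinj (Nat.mod_lt _ hpos) (Nat.mod_lt _ hpos) h, fun h => congrArg x h⟩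
  · ext v
    constructor
    · rintro ⟨n, rfl⟩
      exact ⟨n % k, Nat.mod_lt _ hpos, rfl⟩
    · rintro ⟨n, hn, rfl⟩
      exact ⟨n, congrArg x (Nat.mod_eq_of_lt hn)⟩

namespace IsPeriodicCycle

variable {V : Type*} {G : SimpleGraph V} {k : ℕ} {y : ℕ → V}

theorem preconnected_induce (h : IsPeriodicCycle G k y) :
    (G.induce (Set.range y)).Preconnected := by
  have key : ∀ n, (G.induce (Set.range y)).Reachable ⟨y 0, 0, rfl⟩ ⟨y n, n, rfl⟩ := by
    intro n
    induction n with
    | zero => rfl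
    | succ n ih =>
      refine ih.trans (SimpleGraph.Adj.reachable ?_)
      exact h.adj n
  rintro ⟨_, m, rfl⟩ ⟨_, n, rfl⟩
  exact (key m).symm.trans (key n)

/-- A cycle of `G` inside `S` is a cycle of the graph induced on `S`. -/
theorem induce (h : IsPeriodicCycle G k y) {S : Set V} (hS : ∀ n, y n ∈ S) :
    IsPeriodicCycle (G.induce S) k (fun n => ⟨y n, hS n⟩) :=
  ⟨h.three_le, h.adj, fun m n => by rw [Subtype.mk.injEq, h.eq_iff]⟩

/-- The edge leaving position `i` reappears only after a full turn; the length being at least `3`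
excludes its reappearing with the opposite orientation. -/
theorem edge_ne (h : IsPeriodicCycle G k y) (i j : ℕ) (hj : j + 1 < k) :
    s(y (i + 1 + j), y (i + 1 + j + 1)) ≠ s(y i, y (i + 1)) := by
  have hk := h.three_le
  rw [Ne, Sym2.eq_iff, h.eq_iff, h.eq_iff, h.eq_iff, h.eq_iff]
  rintro (⟨h1, -⟩ | ⟨h1, h2⟩)
  · have := (Nat.modEq_iff_dvd' (by omega)).1 h1.symm
    rw [show i + 1 + j - i = j + 1 by omega] at this
    have := Nat.le_of_dvd (by omega) this
    omega
  · have d1 := (Nat.modEq_iff_dvd' (by omega)).1 h1.symm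
    have d2 := (Nat.modEq_iff_dvd' (by omega)).1 h2.symm
    have := Nat.le_of_dvd (by omega) ((Nat.dvd_sub d2 d1))
    omega

theorem not_isBridge (h : IsPeriodicCycle G k y) (i : ℕ) : ¬ G.IsBridge s(y i, y (i + 1)) := by
  have hk := h.three_le
  rw [SimpleGraph.isBridge_iff, not_not]
  have key : ∀ j, j + 1 ≤ k →
      (G.deleteEdges {s(y i, y (i + 1))}).Reachable (y (i + 1)) (y (i + 1 + j)) := by
    intro j
    induction j with
    | zero => intro _; rfl
    | succ j ih =>
      intro hj
      refine (ih (by omega)).trans (SimpleGraph.Adj.reachable ?_)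
      rw [SimpleGraph.deleteEdges_adj]
      exact ⟨h.adj _, h.edge_ne i j (by omega)⟩
  have hlast := key (k - 1) (by omega)
  have : y (i + 1 + (k - 1)) = y i := by
    rw [h.eq_iff, show i + 1 + (k - 1) = i + k by omega]
    simp [Nat.ModEq]
  rw [this] at hlast
  exact hlast.symm

theorem deleteEdges (h : IsPeriodicCycle G k y) {e : Sym2 V}
    (he : ∀ n, s(y n, y (n + 1)) ≠ e) : IsPeriodicCycle (G.deleteEdges {e}) k y :=
  ⟨h.three_le, fun n => SimpleGraph.deleteEdges_adj.2 ⟨h.adj n, he n⟩, h.eq_iff⟩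

end IsPeriodicCycle

theorem range_subset_of_edges {V : Type*} {y₁ y₂ : ℕ → V}
    (h : ∀ i, ∃ n, s(y₂ n, y₂ (n + 1)) = s(y₁ i, y₁ (i + 1))) :
    Set.range y₁ ⊆ Set.range y₂ := by
  rintro _ ⟨i, rfl⟩
  obtain ⟨n, hn⟩ := h i
  rcases Sym2.eq_iff.1 hn with ⟨h1, -⟩ | ⟨-, h1⟩
  · exact ⟨n, h1⟩
  · exact ⟨n + 1, h1⟩

theorem ncard_edgeSet_deleteEdges {V : Type*} [Finite V] (G : SimpleGraph V) {e : Sym2 V}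
    (he : e ∈ G.edgeSet) : (G.deleteEdges {e}).edgeSet.ncard + 1 = G.edgeSet.ncard := by
  rw [SimpleGraph.edgeSet_deleteEdges]
  exact Set.ncard_sdiff_singleton_add_one he (Set.toFinite _)

/-- An edge of the first cycle missing from the second can be deleted without disconnecting `G` or
destroying the second cycle, from which a further edge can then be deleted. -/
theorem card_add_one_le_of_edge {V : Type*} [Finite V] {G : SimpleGraph V} (hG : G.Connected)
    {k₁ k₂ : ℕ} {y₁ y₂ : ℕ → V} (h₁ : IsPeriodicCycle G k₁ y₁) (h₂ : IsPeriodicCycle G k₂ y₂)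
    {i : ℕ} (hi : ∀ n, s(y₂ n, y₂ (n + 1)) ≠ s(y₁ i, y₁ (i + 1))) :
    Nat.card V + 1 ≤ G.edgeSet.ncard := by
  have h₂' := h₂.deleteEdges hi
  have hG' := hG.connected_delete_edge_of_not_isBridge (h₁.not_isBridge i)
  have hG'' := hG'.connected_delete_edge_of_not_isBridge (h₂'.not_isBridge 0)
  have c₁ := ncard_edgeSet_deleteEdges G (G.mem_edgeSet.2 (h₁.adj i))
  have c₂ := ncard_edgeSet_deleteEdges _ ((SimpleGraph.mem_edgeSet _).2 (h₂'.adj 0))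
  have c₃ := hG''.card_vert_le_card_edgeSet_add_one
  rw [Nat.card_coe_set_eq] at c₃
  omega

/-- A connected graph containing two cycles with distinct vertex sets has more edges than
vertices. -/
theorem card_add_one_le_of_two_cycles {V : Type*} [Finite V] {G : SimpleGraph V}
    (hG : G.Connected) {k₁ k₂ : ℕ} {y₁ y₂ : ℕ → V} (h₁ : IsPeriodicCycle G k₁ y₁)
    (h₂ : IsPeriodicCycle G k₂ y₂) (hne : Set.range y₁ ≠ Set.range y₂) :
    Nat.card V + 1 ≤ G.edgeSet.ncard := by
  by_contra hcon
  refine hne (Set.Subset.antisymm ?_ ?_)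
  · refine range_subset_of_edges fun i => ?_
    by_contra! hi
    exact hcon (card_add_one_le_of_edge hG h₁ h₂ hi)
  · refine range_subset_of_edges fun i => ?_
    by_contra! hi
    exact hcon (card_add_one_le_of_edge hG h₂ h₁ hi)

theorem ncard_edgeSet_induce_le {V : Type*} [Finite V] (G : SimpleGraph V) (S : Set V) :
    (G.induce S).edgeSet.ncard ≤ (edgesIn G S).ncard := by
  refine Set.ncard_le_ncard_of_injOn (Sym2.map Subtype.val) ?_
    (Sym2.map.injective Subtype.val_injective).injOn (Set.toFinite _)
  intro e
  induction e with | h a b => ?_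
  intro he
  refine ⟨he, ?_⟩
  simp

/-- The endpoints of a geodesic `p` lie in `C₁` and `C₂`, so at most `p.length - 1` of its vertices
are new; if `p` is trivial, the deficit of one comes from the common vertex of `C₁` and `C₂`. -/
theorem ncard_union_support_le {V : Type*} [Finite V] {G : SimpleGraph V} {C₁ C₂ : Set V}
    {u v : V} (hu : u ∈ C₁) (hv : v ∈ C₂) (p : G.Walk u v) (hp : p.length = G.dist u v) :
    ((C₁ ∪ {w | w ∈ p.support}) ∪ C₂).ncard + 1 ≤ C₁.ncard + C₂.ncard + p.length := by
  classical
  have hP : {w | w ∈ p.support}.ncard ≤ p.length + 1 := by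
    have : {w | w ∈ p.support} = (p.support.toFinset : Set V) := by ext; simp
    rw [this, Set.ncard_coe_finset, ← p.length_support]
    exact List.toFinset_card_le _
  set P := {w | w ∈ p.support} with hPdef
  have huP : u ∈ P := p.start_mem_support
  have hvP : v ∈ P := p.end_mem_support
  by_cases huv : u = v
  · subst huv
    have hl : p.length = 0 := by rw [hp, SimpleGraph.dist_self]
    have hsub : P ⊆ C₁ := by
      have h1 : P.ncard ≤ 1 := by omega
      intro w hw
      rwa [(Set.ncard_le_one (Set.toFinite _)).1 h1 w hw u huP]
    rw [Set.union_eq_left.2 hsub]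
    have h1 := Set.ncard_union_add_ncard_inter C₁ C₂ (Set.toFinite _) (Set.toFinite _)
    have h2 : 0 < (C₁ ∩ C₂).ncard := (Set.ncard_pos (Set.toFinite _)).2 ⟨u, hu, hv⟩
    omega
  · have hsub : (C₁ ∪ P) ∪ C₂ ⊆ (C₁ ∪ C₂) ∪ (P \ {u, v}) := by
      rintro w ((h | h) | h)
      · exact Or.inl (Or.inl h)
      · by_cases hw : w ∈ ({u, v} : Set V)
        · rcases hw with rfl | rfl
          · exact Or.inl (Or.inl hu)
          · exact Or.inl (Or.inr hv)
        · exact Or.inr ⟨h, hw⟩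
      · exact Or.inl (Or.inr h)
    have h1 := Set.ncard_le_ncard hsub (Set.toFinite _)
    have h2 := Set.ncard_union_le (C₁ ∪ C₂) (P \ {u, v})
    have h3 := Set.ncard_union_le C₁ C₂
    have h4 := Set.ncard_sdiff_add_ncard_of_subset (s := {u, v}) (t := P)
      (Set.pair_subset huP hvP) (Set.toFinite _)
    rw [Set.ncard_pair huv] at h4
    omega

/-- The conclusion `d_G(C₁,C₂) ≥ 1 + 1/δ − |C₁| − |C₂|` is stated
as the corresponding lower bound on `d_G(u,v)` for all `u ∈ C₁`, `v ∈ C₂`. -/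
theorem statement17 {V : Type*} [Fintype V] (G : SimpleGraph V) (δ : ℝ)
    (hδ₀ : 0 < δ) (hδ₁ : δ < 1) (hconn : G.Connected) (hsp : IsSparse G δ)
    (C₁ C₂ : Set V) (h₁ : IsCycleSet G C₁) (h₂ : IsCycleSet G C₂) (hne : C₁ ≠ C₂) :
    ∀ u ∈ C₁, ∀ v ∈ C₂,
      1 + 1 / δ - (C₁.ncard : ℝ) - (C₂.ncard : ℝ) ≤ (G.dist u v : ℝ) := by
  intro u hu v hv
  obtain ⟨p, hp⟩ := hconn.exists_walk_length_eq_dist u v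
  have hcard := ncard_union_support_le hu hv p hp
  rw [hp] at hcard
  obtain ⟨k₁, y₁, hy₁, rfl⟩ := h₁.exists_periodic
  obtain ⟨k₂, y₂, hy₂, rfl⟩ := h₂.exists_periodic
  set S := (Set.range y₁ ∪ {w | w ∈ p.support}) ∪ Set.range y₂ with hS
  have hSconn : (G.induce S).Connected :=
    SimpleGraph.induce_union_connected
      (SimpleGraph.induce_union_connected hy₁.preconnected_induce
        p.connected_induce_support.preconnected ⟨u, hu, p.start_mem_support⟩).preconnected
      hy₂.preconnected_induce ⟨v, Or.inr p.end_mem_support, hv⟩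
  have m₁ : ∀ n, y₁ n ∈ S := fun n => Or.inl (Or.inl ⟨n, rfl⟩)
  have m₂ : ∀ n, y₂ n ∈ S := fun n => Or.inr ⟨n, rfl⟩
  have hedges := card_add_one_le_of_two_cycles hSconn (hy₁.induce m₁) (hy₂.induce m₂) (by
    intro h
    have := congrArg (Set.image Subtype.val) h
    rw [← Set.range_comp, ← Set.range_comp] at this
    exact hne this)
  rw [Nat.card_coe_set_eq] at hedges
  have hle := hedges.trans (ncard_edgeSet_induce_le G S)
  have hsS := hsp S
  have hle' : (S.ncard : ℝ) + 1 ≤ ((edgesIn G S).ncard : ℝ) := by exact_mod_cast hle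
  have hcard' : (S.ncard : ℝ) + 1 ≤ (Set.range y₁).ncard + (Set.range y₂).ncard + G.dist u v := by
    exact_mod_cast hcard
  have hδS : 1 / δ ≤ (S.ncard : ℝ) := by
    rw [div_le_iff₀ hδ₀]
    linarith
  linarith
end

section
/- Fix n,d,r ∈ ℕ and let G be a connected simple graph on n vertices whose maximum degree is at most d. Suppose S,T ⊆ V_G satisfy S ⊆ ∪_{u∈T} B_G(u,r), where B_G(u,r) = {v ∈ V_G : d_G(u,v) ≤ r}. Then there exists U ⊆ V_G with S ⊆ U such that |U| ≤ |T|·(d(d−1)^{3r−1} + diam(G)), and, denoting by H the graph (U, E_G(U)), one has diam(H) ≤ 6r + 2·diam(G), and every a,b ∈ S satisfy d_G(a,b) ≤ d_H(a,b) ≤ 2·(diam(G)/r + 1)·d_G(a,b). -/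
/-!
Fix a root `w` and let `U` be the union, over `u ∈ T`, of the ball of radius
`ρ = r + ⌊r / 2⌋` around `u` and of a geodesic from `u` to `w`.

* Size: a geodesic adds at most `diam G` vertices to its ball, and a ball of radius `ρ` has at
  most `(d + 1) ^ ρ ≤ (d - 1) ^ (2 ρ) ≤ (d - 1) ^ (3 r) ≤ d (d - 1) ^ (3 r - 1)` points
  (`card_ball_le`, `pow_bound`).
  The choice `ρ ≤ 3 r / 2` leaves room for this crude count; balls of radius `3 r` may have more
  than `d (d - 1) ^ (3 r - 1)` points, which bounds only the sphere.
* Diameter: every point of `U` reaches `w` inside `U` in at most `ρ + diam G` steps.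
* Distortion: if `d_G(a, b) ≤ 2 ⌊r / 2⌋`, each vertex of a geodesic from `a` to `b` is within
  `⌊r / 2⌋` of `a` or `b`, hence in one of the balls, so distances agree. Otherwise
  `d_G(a, b) ≥ r`, and the route through `w` has length at most
  `2 (r + diam G) = 2 (diam G / r + 1) r`.
-/

/-!
Statement 18 (Lemma 6.16 of Mendel–Naor): given a connected simple graph `G` on `n`
vertices of maximum degree at most `d`, and `S ⊆ ⋃_{u ∈ T} B_G(u, r)`, there is a
set `U ⊇ S` of size at most `|T|(d(d−1)^{3r−1} + diam G)` such that the induced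
subgraph `H = (U, E_G(U))` has diameter at most `6r + 2·diam G` and distorts
distances between points of `S` by a factor of at most `2(diam G / r + 1)`.

`gdiam G` denotes the diameter `max_{u,v} d_G(u,v)` of a (finite, connected) simple
graph. The paper's context has `d ≥ 3` (the bound `|B_G(u,k)| ≤ d(d−1)^{k−1}` used
in the proof requires it), so the hypotheses `3 ≤ d` and `0 < r` are included.
-/

noncomputable section

/-- The diameter of a (finite, connected) simple graph. -/
def gdiam {V : Type*} [Fintype V] (G : SimpleGraph V) : ℕ :=
  sSup (Set.range fun p : V × V => G.dist p.1 p.2)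

theorem dist_le_gdiam {V : Type*} [Fintype V] (G : SimpleGraph V) (u v : V) :
    G.dist u v ≤ gdiam G :=
  le_csSup (Set.finite_range _).bddAbove ⟨(u, v), rfl⟩

/-- The closed ball of radius `k` around `u` in the shortest-path metric, as a finset. -/
def ball {V : Type*} [Fintype V] (G : SimpleGraph V) (u : V) (k : ℕ) : Finset V :=
  {x | G.dist u x ≤ k}

theorem dist_add_dist_le_length {V : Type*} {G : SimpleGraph V} {a b z : V} (p : G.Walk a b)
    (hz : z ∈ p.support) : G.dist a z ≤ p.length ∧ G.dist a z + G.dist z b ≤ p.length := by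
  classical
  have h1 := SimpleGraph.dist_le (p.takeUntil z hz)
  have h2 := SimpleGraph.dist_le (p.dropUntil z hz)
  have h3 := congrArg SimpleGraph.Walk.length (p.take_spec hz)
  rw [SimpleGraph.Walk.length_append] at h3
  omega

theorem induce_dist_le {V : Type*} {G : SimpleGraph V} {a b : V} (p : G.Walk a b) {U : Set V}
    (hp : ∀ x ∈ p.support, x ∈ U) (ha : a ∈ U) (hb : b ∈ U) :
    (G.induce U).Reachable ⟨a, ha⟩ ⟨b, hb⟩ ∧
      (G.induce U).dist ⟨a, ha⟩ ⟨b, hb⟩ ≤ p.length := by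
  refine ⟨⟨p.induce U hp⟩, (SimpleGraph.dist_le (p.induce U hp)).trans_eq ?_⟩
  rw [← SimpleGraph.Walk.length_map (SimpleGraph.Embedding.induce U).toHom]
  exact congrArg SimpleGraph.Walk.length (SimpleGraph.Walk.map_induce p hp)

/-- Each unit increase of the radius multiplies the size of a ball by at most `d + 1`, since
the larger ball is covered by the closed neighbourhoods of the points of the smaller one. -/
theorem card_ball_le {n d : ℕ} {G : SimpleGraph (Fin n)} (hconn : G.Connected)
    (hdeg : ∀ v, (G.neighborSet v).ncard ≤ d) (u : Fin n) (k : ℕ) :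
    (ball G u k).card ≤ (d + 1) ^ k := by
  classical
  induction k with
  | zero =>
    have h : ball G u 0 ⊆ {u} := by
      intro x hx
      have hx' : G.dist u x = 0 := by simpa [ball] using hx
      simp [(hconn.dist_eq_zero_iff.mp hx').symm]
    simpa using Finset.card_le_card h
  | succ k ih =>
    have h : ball G u (k + 1) ⊆
        (ball G u k).biUnion fun v => insert v (G.neighborSet v).toFinset := by
      intro x hx
      have hx' : G.dist u x ≤ k + 1 := by simpa [ball] using hx
      obtain ⟨p, hp⟩ := hconn.exists_walk_length_eq_dist x u
      rw [SimpleGraph.dist_comm] at hp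
      rw [Finset.mem_biUnion]
      cases p with
      | nil => exact ⟨u, by simp [ball], by simp⟩
      | @cons _ y _ hxy q =>
        refine ⟨y, ?_, by simp [hxy.symm]⟩
        have hq := SimpleGraph.dist_le q
        rw [SimpleGraph.dist_comm] at hq
        rw [SimpleGraph.Walk.length_cons] at hp
        have : G.dist u y ≤ k := by omega
        simpa [ball] using this
    calc (ball G u (k + 1)).card ≤ _ := Finset.card_le_card h
      _ ≤ (ball G u k).card * (d + 1) := by
        refine Finset.card_biUnion_le_card_mul _ _ _ fun v _ => ?_
        refine (Finset.card_insert_le _ _).trans ?_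
        rw [← Set.ncard_eq_toFinset_card']
        exact Nat.succ_le_succ (hdeg v)
      _ ≤ (d + 1) ^ (k + 1) := by
        rw [pow_succ]
        exact Nat.mul_le_mul_right _ ih

/-- The numerical comparison behind the cardinality bound; it rests on `d + 1 ≤ (d - 1) ^ 2`
for `3 ≤ d`, which is an equality at `d = 3`. -/
theorem pow_bound {d r : ℕ} (hd : 3 ≤ d) (hr : 0 < r) :
    ((d : ℝ) + 1) ^ (r + r / 2) ≤ (d : ℝ) * ((d : ℝ) - 1) ^ (3 * r - 1) := by
  have hd' : (3 : ℝ) ≤ d := by exact_mod_cast hd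
  have hd1 : (1 : ℝ) ≤ (d : ℝ) - 1 := by linarith
  calc ((d : ℝ) + 1) ^ (r + r / 2) ≤ (((d : ℝ) - 1) ^ 2) ^ (r + r / 2) := by
        gcongr
        nlinarith
    _ = ((d : ℝ) - 1) ^ (2 * (r + r / 2)) := (pow_mul _ _ _).symm
    _ ≤ ((d : ℝ) - 1) ^ ((3 * r - 1) + 1) := pow_le_pow_right₀ hd1 (by omega)
    _ = ((d : ℝ) - 1) * ((d : ℝ) - 1) ^ (3 * r - 1) := by rw [pow_succ, mul_comm]
    _ ≤ _ := by
        gcongr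
        linarith

theorem statement18 {n : ℕ} (d r : ℕ) (hd : 3 ≤ d) (hr : 0 < r)
    (G : SimpleGraph (Fin n)) (hconn : G.Connected)
    (hdeg : ∀ v, (G.neighborSet v).ncard ≤ d)
    (S T : Set (Fin n))
    (hST : ∀ a ∈ S, ∃ u ∈ T, G.dist u a ≤ r) :
    ∃ (U : Set (Fin n)) (hSU : S ⊆ U),
      ((U.ncard : ℝ) ≤
          (T.ncard : ℝ) * ((d : ℝ) * ((d : ℝ) - 1) ^ (3 * r - 1) + (gdiam G : ℝ))) ∧
      (∀ x y : ↥U, (G.induce U).Reachable x y ∧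
          (G.induce U).dist x y ≤ 6 * r + 2 * gdiam G) ∧
      ∀ (a b : Fin n) (ha : a ∈ S) (hb : b ∈ S),
        G.dist a b ≤ (G.induce U).dist ⟨a, hSU ha⟩ ⟨b, hSU hb⟩ ∧
        ((G.induce U).dist ⟨a, hSU ha⟩ ⟨b, hSU hb⟩ : ℝ) ≤
          2 * ((gdiam G : ℝ) / (r : ℝ) + 1) * (G.dist a b : ℝ) := by
  classical
  obtain ⟨w⟩ := hconn.nonempty
  choose p hp using fun u => hconn.exists_walk_length_eq_dist u w
  set F : Fin n → Finset (Fin n) :=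
    fun u => ball G u (r + r / 2) ∪ (p u).support.tail.toFinset with hF
  set U : Set (Fin n) := ((T.toFinset.biUnion F : Finset (Fin n)) : Set (Fin n)) with hU
  have hball : ∀ u ∈ T, ∀ x, G.dist u x ≤ r + r / 2 → x ∈ U := by
    intro u hu x hx
    simp only [hU, hF, ball, Finset.coe_biUnion, Set.mem_iUnion]
    exact ⟨u, by simpa using hu, by simp [hx]⟩
  have hpath : ∀ u ∈ T, ∀ x ∈ (p u).support, x ∈ U := by
    intro u hu x hx
    rw [← SimpleGraph.Walk.cons_tail_support, List.mem_cons] at hx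
    rcases hx with rfl | hx
    · exact hball x hu x (by simp)
    · simp only [hU, hF, Finset.coe_biUnion, Set.mem_iUnion]
      exact ⟨u, by simpa using hu, by simp [hx]⟩
  have hSU : S ⊆ U := by
    intro a ha
    obtain ⟨u, hu, hua⟩ := hST a ha
    exact hball u hu a (by omega)
  -- Vertices near a point of `T` reach `w` inside `U` through that point.
  have hnear : ∀ u ∈ T, ∀ x, ∀ k ≤ r + r / 2, G.dist u x ≤ k →
      ∃ q : G.Walk x w, (∀ y ∈ q.support, y ∈ U) ∧ q.length ≤ k + gdiam G := by
    intro u hu x k hk hx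
    obtain ⟨q, hq⟩ := hconn.exists_walk_length_eq_dist u x
    refine ⟨q.reverse.append (p u), ?_, ?_⟩
    · intro y hy
      rw [SimpleGraph.Walk.mem_support_append_iff] at hy
      rcases hy with hy | hy
      · have hy' : y ∈ q.support := by simpa using hy
        have h := (dist_add_dist_le_length q hy').1
        exact hball u hu y (by omega)
      · exact hpath u hu y hy
    · have h := dist_le_gdiam G u w
      have h' := hp u
      simp only [SimpleGraph.Walk.length_append, SimpleGraph.Walk.length_reverse]
      omega
  have hroot : ∀ x ∈ U, ∃ q : G.Walk x w, (∀ y ∈ q.support, y ∈ U) ∧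
      q.length ≤ r + r / 2 + gdiam G := by
    intro x hx
    have hx' := hx
    simp only [hU, hF, Finset.coe_biUnion, Set.mem_iUnion] at hx'
    obtain ⟨u, hu, hx'⟩ := hx'
    have hu' : u ∈ T := by simpa using hu
    rw [Finset.mem_coe, Finset.mem_union] at hx'
    rcases hx' with hx' | hx'
    · exact hnear u hu' x _ le_rfl (by simpa [ball] using hx')
    · have hxs : x ∈ (p u).support := List.mem_of_mem_tail (by simpa using hx')
      refine ⟨(p u).dropUntil x hxs, fun y hy => hpath u hu' y
        (SimpleGraph.Walk.support_dropUntil_subset_support _ hxs hy), ?_⟩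
      have h := dist_le_gdiam G u w
      have h' := hp u
      have h'' := (p u).length_dropUntil_le_length hxs
      omega
  refine ⟨U, hSU, ?_, ?_, ?_⟩
  · have hcard : U.ncard ≤ T.ncard * ((d + 1) ^ (r + r / 2) + gdiam G) := by
      rw [hU, Set.ncard_coe_finset, Set.ncard_eq_toFinset_card']
      refine Finset.card_biUnion_le_card_mul _ _ _ fun u _ => ?_
      refine (Finset.card_union_le _ _).trans (Nat.add_le_add (card_ball_le hconn hdeg u _) ?_)
      refine (List.toFinset_card_le _).trans ?_
      rw [List.length_tail, SimpleGraph.Walk.length_support, hp u]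
      exact dist_le_gdiam G u w
    have hpow := pow_bound hd hr
    calc (U.ncard : ℝ) ≤ (T.ncard : ℝ) * (((d : ℝ) + 1) ^ (r + r / 2) + (gdiam G : ℝ)) := by
          exact_mod_cast hcard
      _ ≤ _ := by gcongr
  · rintro ⟨x, hx⟩ ⟨y, hy⟩
    obtain ⟨q, hq, hql⟩ := hroot x hx
    obtain ⟨q', hq', hql'⟩ := hroot y hy
    obtain ⟨h1, h2⟩ := induce_dist_le (q.append q'.reverse) (U := U) (by
      intro z hz
      rw [SimpleGraph.Walk.mem_support_append_iff] at hz
      rcases hz with hz | hz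
      · exact hq z hz
      · exact hq' z (by simpa using hz)) hx hy
    refine ⟨h1, h2.trans ?_⟩
    simp only [SimpleGraph.Walk.length_append, SimpleGraph.Walk.length_reverse]
    omega
  · intro a b ha hb
    obtain ⟨u, hu, hua⟩ := hST a ha
    obtain ⟨v, hv, hvb⟩ := hST b hb
    obtain ⟨q, hq, hql⟩ := hnear u hu a r (by omega) hua
    obtain ⟨q', hq', hql'⟩ := hnear v hv b r (by omega) hvb
    obtain ⟨h1, h2⟩ := induce_dist_le (q.append q'.reverse) (U := U) (by
      intro z hz
      rw [SimpleGraph.Walk.mem_support_append_iff] at hz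
      rcases hz with hz | hz
      · exact hq z hz
      · exact hq' z (by simpa using hz)) (hSU ha) (hSU hb)
    simp only [SimpleGraph.Walk.length_append, SimpleGraph.Walk.length_reverse] at h2
    refine ⟨?_, ?_⟩
    · obtain ⟨s, hs⟩ := h1.exists_walk_length_eq_dist
      rw [← hs, ← SimpleGraph.Walk.length_map (SimpleGraph.Embedding.induce U).toHom s]
      exact SimpleGraph.dist_le _
    · have hr' : (0 : ℝ) < r := by exact_mod_cast hr
      have hD : (0 : ℝ) ≤ (gdiam G : ℝ) / r := by positivity
      obtain ⟨s, hs⟩ := hconn.exists_walk_length_eq_dist a b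
      by_cases hm : G.dist a b ≤ 2 * (r / 2)
      · -- Each vertex of a short geodesic is within `r / 2` of `a` or of `b`.
        obtain ⟨-, h3⟩ := induce_dist_le s (U := U) (by
          intro z hz
          obtain ⟨h4, h5⟩ := dist_add_dist_le_length s hz
          have h6 : G.dist u z ≤ G.dist u a + G.dist a z := hconn.dist_triangle
          have h7 : G.dist v z ≤ G.dist v b + G.dist b z := hconn.dist_triangle
          rw [SimpleGraph.dist_comm (u := b)] at h7
          by_cases h8 : G.dist a z ≤ r / 2
          · exact hball u hu z (by omega)
          · exact hball v hv z (by omega)) (hSU ha) (hSU hb)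
        rw [hs] at h3
        have h3' : ((G.induce U).dist ⟨a, hSU ha⟩ ⟨b, hSU hb⟩ : ℝ) ≤ (G.dist a b : ℝ) := by
          exact_mod_cast h3
        refine h3'.trans (le_mul_of_one_le_left (by positivity) (by linarith))
      · have hm' : (r : ℝ) ≤ (G.dist a b : ℝ) := by
          exact_mod_cast (by omega : r ≤ G.dist a b)
        have h9 : ((G.induce U).dist ⟨a, hSU ha⟩ ⟨b, hSU hb⟩ : ℝ) ≤ 2 * (gdiam G + r) := by
          exact_mod_cast (by omega :
            (G.induce U).dist ⟨a, hSU ha⟩ ⟨b, hSU hb⟩ ≤ 2 * (gdiam G + r))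
        calc ((G.induce U).dist ⟨a, hSU ha⟩ ⟨b, hSU hb⟩ : ℝ) ≤ 2 * (gdiam G + r) := h9
          _ = 2 * ((gdiam G : ℝ) / (r : ℝ) + 1) * r := by field_simp
          _ ≤ _ := by gcongr

end
end

section
/- Fix three integers M,t,d ≥ 3 and let G be a connected d-regular simple graph on n vertices such that d_G(C₁,C₂) > 8M for every pair of distinct cycles C₁,C₂ of G of length less than t, and such that min{|E_G(S, V_G∖S)|/|S| : S ⊆ V_G, 0 < |S| ≤ n/2} ≥ 1/M. For each cycle C of G of length less than t fix an arbitrary edge e_C ∈ E_G(C), let I = {e_C : C a cycle of G of length less than t}, and let L be the graph (V_G, E_G ∖ I). Then min{|E_L(S, V_G∖S)|/|S| : S ⊆ V_G, 0 < |S| ≤ n/2} ≥ 1/(4M). -/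
/-- `E_G(S, V∖S)`: the set of edges of `G` joining a vertex of `S` to a vertex
outside `S`. -/
def edgeBoundary {V : Type*} (G : SimpleGraph V) (S : Set V) : Set (Sym2 V) :=
  {e ∈ G.edgeSet | ∃ u ∈ S, ∃ v ∉ S, e = s(u, v)}

/-- A periodic sequence that satisfies `p` somewhere and fails it somewhere has a step at which
`p` is lost. -/
lemma exists_step {α : Type*} {y : ℕ → α} {k : ℕ} (hk : 0 < k) (hy : ∀ i m, y (i + m * k) = y i)
    (p : α → Prop) {a b : ℕ} (ha : p (y a)) (hb : ¬ p (y b)) :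
    ∃ i, p (y i) ∧ ¬ p (y (i + 1)) := by
  by_contra! h
  have key : ∀ m, p (y (a + m)) := by
    intro m
    induction m with
    | zero => exact ha
    | succ m ih => exact h _ ih
  apply hb
  -- Move `b` beyond `a` by `a` full periods.
  rw [← hy b a]
  have hle : a ≤ b + a * k := by nlinarith
  obtain ⟨m, hm⟩ := Nat.exists_eq_add_of_le hle
  rw [hm]
  exact key m

/-- A cycle that has an edge crossing the boundary of `S` on its vertex set has at least two. -/
lemma exists_other_boundary_edge {V : Type*} {G : SimpleGraph V} {C S : Set V}
    (hC : IsCycleSet G C) {e : Sym2 V} (heC : e ∈ edgesIn G C) (heS : e ∈ edgeBoundary G S) :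
    ∃ f ∈ edgeBoundary G S, f ∈ edgesIn G C ∧ f ≠ e := by
  obtain ⟨k, x, hk, hinj, rfl, hadj⟩ := hC
  obtain ⟨-, u, hu, v, hv, rfl⟩ := heS
  have hk0 : 0 < k := by omega
  let y : ℕ → V := fun i => x (i % k)
  have hper : ∀ i m, y (i + m * k) = y i := fun i m => by simp [y]
  have hyadj : ∀ i, G.Adj (y i) (y (i + 1)) := fun i => by
    simpa [y] using hadj (i % k) (Nat.mod_lt _ hk0)
  have hyC : ∀ i, y i ∈ x '' Set.Iio k := fun i => ⟨i % k, Nat.mod_lt _ hk0, rfl⟩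
  have hyinj : ∀ i j, y i = y j → i % k = j % k := fun i j h =>
    hinj (Nat.mod_lt _ hk0) (Nat.mod_lt _ hk0) h
  have hin : ∀ w ∈ x '' Set.Iio k, ∃ a, y a = w := by
    rintro _ ⟨a, ha, rfl⟩
    exact ⟨a, by simp [y, Nat.mod_eq_of_lt (Set.mem_Iio.1 ha)]⟩
  obtain ⟨a, rfl⟩ := hin u (heC.2 u (by simp))
  obtain ⟨b, rfl⟩ := hin v (heC.2 v (by simp))
  obtain ⟨i, hi, hi'⟩ := exists_step hk0 hper (· ∈ S) hu hv
  obtain ⟨j, hj, hj'⟩ := exists_step hk0 hper (· ∉ S) hv (not_not.2 hu)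
  have hj' : y (j + 1) ∈ S := not_not.1 hj'
  have hmem : ∀ i, s(y i, y (i + 1)) ∈ edgesIn G (x '' Set.Iio k) := by
    intro i
    refine ⟨hyadj i, ?_⟩
    intro w hw
    rcases Sym2.mem_iff.1 hw with rfl | rfl <;> exact hyC _
  have hne : s(y i, y (i + 1)) ≠ s(y j, y (j + 1)) := by
    intro h
    rcases Sym2.eq_iff.1 h with ⟨h1, -⟩ | ⟨h1, h2⟩
    · exact hj (h1 ▸ hi)
    · -- The two steps would traverse one edge in opposite directions, forcing `k ∣ 2`.
      have e1 : i ≡ j + 1 [MOD k] := hyinj _ _ h1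
      have e2 : i + 1 ≡ j [MOD k] := hyinj _ _ h2
      have e3 : j + 2 ≡ j + 0 [MOD k] := (e1.symm.add_right 1).trans e2
      have e4 : 2 ≡ 0 [MOD k] := Nat.ModEq.add_left_cancel' j e3
      have := Nat.le_of_dvd (by norm_num) ((Nat.modEq_zero_iff_dvd).1 e4)
      omega
  by_cases h : s(y i, y (i + 1)) = s(y a, y b)
  · exact ⟨_, ⟨hyadj j, _, hj', _, hj, Sym2.eq_swap⟩, hmem j, fun h' => hne (h.trans h'.symm)⟩
  · exact ⟨_, ⟨hyadj i, _, hi, _, hi', rfl⟩, hmem i, h⟩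

theorem statement19 {n : ℕ} (M t d : ℕ) (hM : 3 ≤ M) (ht : 3 ≤ t) (hd : 3 ≤ d)
    (G : SimpleGraph (Fin n)) (hconn : G.Connected)
    (hreg : ∀ v, (G.neighborSet v).ncard = d)
    (hfar : ∀ C₁ C₂ : Set (Fin n), IsCycleSet G C₁ → IsCycleSet G C₂ →
      C₁.ncard < t → C₂.ncard < t → C₁ ≠ C₂ →
      ∀ u ∈ C₁, ∀ v ∈ C₂, 8 * M < G.dist u v)
    (hexp : ∀ S : Set (Fin n), 0 < S.ncard → 2 * S.ncard ≤ n →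
      (S.ncard : ℝ) ≤ (M : ℝ) * (edgeBoundary G S).ncard)
    (sel : Set (Fin n) → Sym2 (Fin n))
    (hsel : ∀ C : Set (Fin n), IsCycleSet G C → C.ncard < t → sel C ∈ edgesIn G C) :
    ∀ S : Set (Fin n), 0 < S.ncard → 2 * S.ncard ≤ n →
      (S.ncard : ℝ) ≤ 4 * (M : ℝ) *
        (edgeBoundary
          (G.deleteEdges {e | ∃ C : Set (Fin n), IsCycleSet G C ∧ C.ncard < t ∧ e = sel C})
          S).ncard := by
  intro S hS0 hS
  set I : Set (Sym2 (Fin n)) :=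
    {e | ∃ C : Set (Fin n), IsCycleSet G C ∧ C.ncard < t ∧ e = sel C} with hI
  have huniq : ∀ C₁ C₂ : Set (Fin n), IsCycleSet G C₁ → IsCycleSet G C₂ →
      C₁.ncard < t → C₂.ncard < t → ∀ f, f ∈ edgesIn G C₁ → f ∈ edgesIn G C₂ → C₁ = C₂ := by
    intro C₁ C₂ h₁ h₂ l₁ l₂ f hf₁ hf₂
    by_contra hne
    induction f with
    | _ a b =>
      have := hfar C₁ C₂ h₁ h₂ l₁ l₂ hne a (hf₁.2 a (by simp)) a (hf₂.2 a (by simp))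
      simp at this
  have hL : edgeBoundary (G.deleteEdges I) S = edgeBoundary G S \ I := by
    ext e
    simp only [edgeBoundary, SimpleGraph.edgeSet_deleteEdges, Set.mem_diff, Set.mem_setOf_eq]
    tauto
  have hex : ∀ e ∈ edgeBoundary G S ∩ I, ∃ f, f ∈ edgeBoundary G S \ I ∧
      ∃ C, IsCycleSet G C ∧ C.ncard < t ∧ e = sel C ∧ f ∈ edgesIn G C := by
    rintro _ ⟨heS, C, hC, hCt, rfl⟩
    obtain ⟨f, hfS, hfC, hne⟩ := exists_other_boundary_edge hC (hsel C hC hCt) heS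
    refine ⟨f, ⟨hfS, ?_⟩, C, hC, hCt, rfl, hfC⟩
    rintro ⟨C', hC', hCt', rfl⟩
    exact hne (congrArg sel (huniq C' C hC' hC hCt' hCt _ (hsel C' hC' hCt') hfC))
  choose! f hf1 hf2 using hex
  have hinj : Set.InjOn f (edgeBoundary G S ∩ I) := by
    intro e he e' he' h
    obtain ⟨C, hC, hCt, h1, h2⟩ := hf2 e he
    obtain ⟨C', hC', hCt', h1', h2'⟩ := hf2 e' he'
    rw [h1, h1', huniq C C' hC hC' hCt hCt' _ h2 (h ▸ h2')]
  have hcard : (edgeBoundary G S ∩ I).ncard ≤ (edgeBoundary G S \ I).ncard :=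
    Set.ncard_le_ncard_of_injOn f hf1 hinj (Set.toFinite _)
  have hsum := Set.ncard_inter_add_ncard_diff_eq_ncard (edgeBoundary G S) I (Set.toFinite _)
  have h2 : ((edgeBoundary G S).ncard : ℝ) ≤ 2 * (edgeBoundary G S \ I).ncard := by
    exact_mod_cast (by omega : (edgeBoundary G S).ncard ≤ 2 * (edgeBoundary G S \ I).ncard)
  rw [hL]
  have hM0 : (0 : ℝ) ≤ M := Nat.cast_nonneg M
  have hB0 : (0 : ℝ) ≤ M * (edgeBoundary G S \ I).ncard := by positivity
  have h3 := hexp S hS0 hS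
  have h4 := mul_le_mul_of_nonneg_left h2 hM0
  linarith
end
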